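/- arXiv:1703.07434 — 18 statements merged into one kernel-verified Lean document; each statement's English description precedes it below -/
import Mathlib

section
/- Let T be a ternary semigroup and let g, h be TS-characters of T. The following are equivalent: (i) h⁻¹({1}) ⊆ g⁻¹({1}); (ii) g⁻¹({0,1}) ⊆ h⁻¹({0,1}); (iii) Z(g) ⊆ Z(h) and for every a ∈ T with h(a) ≠ 0 one has g(a) = h(a); (iv) h = h²·g (pointwise product of characters). (These equivalent conditions define the specialization relation g ⇝ h.) -/
universe u

/-- A ternary semigroup: a commutative monoid with distinguished elements `0` (`tzero`)
and `-1` (`tneg`) satisfying `x³ = x`, `-1 ≠ 1`, `(-1)(-1) = 1`, `x·0 = 0`, and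
`x = -1·x → x = 0`. -/
class TernarySemigroup (G : Type u) extends CommMonoid G where
  tzero : G
  tneg : G
  cube : ∀ x : G, x * x * x = x
  tneg_ne_one : tneg ≠ 1
  tneg_mul_tneg : tneg * tneg = 1
  mul_tzero : ∀ x : G, x * tzero = tzero
  eq_tzero_of_eq_tneg_mul : ∀ x : G, x = tneg * x → x = tzero

open TernarySemigroup

/-- A TS-character of `G` with values in the ternary semigroup `3 = {-1,0,1}` (`SignType`). -/
def IsTSChar {G : Type u} [TernarySemigroup G] (h : G → SignType) : Prop :=
  (∀ x y : G, h (x * y) = h x * h y) ∧ h 1 = 1 ∧ h (tzero : G) = 0 ∧ h (tneg : G) = -1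

/-- Characterizations of the specialization relation `g ⇝ h` between TS-characters. -/
theorem stmt_0 {G : Type u} [TernarySemigroup G] (g h : G → SignType)
    (hg : IsTSChar g) (hh : IsTSChar h) :
    List.TFAE
      [ ∀ a : G, h a = 1 → g a = 1,
        ∀ a : G, (g a = 0 ∨ g a = 1) → (h a = 0 ∨ h a = 1),
        (∀ a : G, g a = 0 → h a = 0) ∧ (∀ a : G, h a ≠ 0 → g a = h a),
        ∀ a : G, h a = h a * h a * g a ] := by
  have hn : ∀ a : G, h (tneg * a) = - h a := fun a => by
    rw [hh.1, hh.2.2.2]; generalize h a = y; revert y; decide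
  have gn : ∀ a : G, g (tneg * a) = - g a := fun a => by
    rw [hg.1, hg.2.2.2]; generalize g a = y; revert y; decide
  tfae_have 1 → 2 := by
    intro H a
    have h2 := H (tneg * a)
    rw [hn, gn] at h2
    revert h2
    generalize h a = y
    generalize g a = x
    revert x y
    decide
  tfae_have 2 → 3 := by
    intro H
    have key : ∀ a, (g a = 0 → h a = 0) ∧ (h a ≠ 0 → g a = h a) := by
      intro a
      have h1 := H a
      have h2 := H (tneg * a)
      rw [hn, gn] at h2
      revert h1 h2
      generalize h a = y
      generalize g a = x
      revert x y
      decide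
    exact ⟨fun a => (key a).1, fun a => (key a).2⟩
  tfae_have 3 → 4 := by
    intro H a
    have h2 := H.2 a
    revert h2
    generalize h a = y
    generalize g a = x
    revert x y
    decide
  tfae_have 4 → 1 := by
    intro H a
    have h2 := H a
    revert h2
    generalize h a = y
    generalize g a = x
    revert x y
    decide
  tfae_finish
end

section
/- Let T be a ternary semigroup and a, b ∈ T. The following are equivalent: (1) every TS-character h of T with h(a) = 0 satisfies h(b) = 0; (2) a²b² = b²; (3) a divides b (b = a·x for some x ∈ T); (4) b·T ⊆ a·T. -/
universe u

open TernarySemigroup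

/-- Sign submonoids relative to `e`. -/
def TSGood {G : Type u} [TernarySemigroup G] (e : G) (S : Submonoid G) : Prop :=
  ∀ s ∈ S, s * s * e = e ∧ s * e ≠ tneg * e

theorem ts_exists_max {G : Type u} [TernarySemigroup G] (e : G) (he : e ≠ tzero) :
    ∃ S : Submonoid G, Maximal (TSGood e) S := by
  have h0 : TSGood e (⊥ : Submonoid G) := by
    intro s hs
    rw [Submonoid.mem_bot] at hs
    subst hs
    refine ⟨by simp, fun h => he (eq_tzero_of_eq_tneg_mul e (by simpa using h))⟩
  obtain ⟨S, _, hS⟩ := zorn_le_nonempty₀ {S : Submonoid G | TSGood e S} (by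
    intro c hc hch y hy
    refine ⟨sSup c, ?_, fun z hz => le_sSup hz⟩
    intro s hs
    rw [Submonoid.mem_sSup_of_directedOn ⟨y, hy⟩ hch.directedOn] at hs
    obtain ⟨T, hT, hsT⟩ := hs
    exact hc hT s hsT) ⊥ h0
  exact ⟨S, hS⟩

theorem ts_mem_of {G : Type u} [TernarySemigroup G] {e : G} {S : Submonoid G}
    (hS : Maximal (TSGood e) S) {x : G} (hx : x * x * e = e)
    (h : ∀ s ∈ S, s * x * e ≠ tneg * e) : x ∈ S := by
  have hg := hS.prop
  let S' : Submonoid G :=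
    { carrier := {y | y * y * e = e ∧ ∃ s ∈ S, y * e = s * e ∨ y * e = s * x * e}
      one_mem' := ⟨by simp, 1, S.one_mem, Or.inl rfl⟩
      mul_mem' := by
        rintro y z ⟨hy, s, hs, hys⟩ ⟨hz, t, ht, hzt⟩
        refine ⟨?_, s * t, S.mul_mem hs ht, ?_⟩
        · calc y * z * (y * z) * e = y * y * (z * z * e) := by ac_rfl
            _ = e := by rw [hz, hy]
        · have e1 : y * z * e = y * (z * e) := by ac_rfl
          rcases hys with hys | hys <;> rcases hzt with hzt | hzt
          · left
            calc y * z * e = y * (z * e) := by ac_rfl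
              _ = t * (y * e) := by rw [hzt]; ac_rfl
              _ = s * t * e := by rw [hys]; ac_rfl
          · right
            calc y * z * e = y * (z * e) := by ac_rfl
              _ = t * x * (y * e) := by rw [hzt]; ac_rfl
              _ = s * t * x * e := by rw [hys]; ac_rfl
          · right
            calc y * z * e = y * (z * e) := by ac_rfl
              _ = t * (y * e) := by rw [hzt]; ac_rfl
              _ = s * t * x * e := by rw [hys]; ac_rfl
          · left
            calc y * z * e = y * (z * e) := by ac_rfl
              _ = t * x * (y * e) := by rw [hzt]; ac_rfl
              _ = s * t * (x * x * e) := by rw [hys]; ac_rfl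
              _ = s * t * e := by rw [hx] }
  have hS' : TSGood e S' := by
    rintro y ⟨hy, s, hs, hys⟩
    refine ⟨hy, ?_⟩
    rcases hys with hys | hys
    · rw [hys]; exact (hg s hs).2
    · rw [hys]; exact h s hs
  have hle : S ≤ S' := fun s hs => ⟨(hg s hs).1, s, hs, Or.inl rfl⟩
  exact hS.le_of_ge hS' hle ⟨hx, 1, S.one_mem, Or.inr (by simp)⟩

theorem ts_exists_char {G : Type u} [TernarySemigroup G] (e : G) (he : e ≠ tzero) :
    ∃ h : G → SignType, IsTSChar h ∧ ∀ x, h x = 0 ↔ x * x * e ≠ e := by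
  classical
  obtain ⟨S, hS⟩ := ts_exists_max e he
  have hg := hS.prop
  have nn : (tneg : G) * tneg = 1 := tneg_mul_tneg
  have nnx : ∀ x : G, tneg * (tneg * x) = x := fun x => by rw [← mul_assoc, nn, one_mul]
  have nsq : ∀ x : G, tneg * x * (tneg * x) = x * x := fun x => by
    calc tneg * x * (tneg * x) = tneg * tneg * (x * x) := by ac_rfl
      _ = x * x := by rw [nn, one_mul]
  have hnot : ∀ x, x ∈ S → tneg * x ∈ S → False := by
    intro x h1 h2
    refine (hg _ (S.mul_mem h1 h2)).2 ?_
    calc x * (tneg * x) * e = tneg * (x * x * e) := by ac_rfl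
      _ = tneg * e := by rw [(hg x h1).1]
  have hor : ∀ x, x * x * e = e → x ∈ S ∨ tneg * x ∈ S := by
    intro x hx
    by_contra hc
    push Not at hc
    have h1 : ∃ s ∈ S, s * x * e = tneg * e := by
      by_contra h; push Not at h; exact hc.1 (ts_mem_of hS hx h)
    have h2 : ∃ s ∈ S, s * (tneg * x) * e = tneg * e := by
      by_contra h; push Not at h
      exact hc.2 (ts_mem_of hS (by rw [nsq, hx]) h)
    obtain ⟨s, hs, h1⟩ := h1
    obtain ⟨t, ht, h2⟩ := h2
    refine (hg _ (S.mul_mem hs ht)).2 ?_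
    calc s * t * e = s * t * (x * x * e) := by rw [hx]
      _ = t * x * (s * x * e) := by ac_rfl
      _ = t * (tneg * x) * e := by rw [h1]; ac_rfl
      _ = tneg * e := h2
  have hmulF : ∀ x y : G, x * y * (x * y) * e = e ↔ x * x * e = e ∧ y * y * e = e := by
    have key : ∀ x y : G, x * y * (x * y) * e = e → x * x * e = e := by
      intro x y hxy
      calc x * x * e = x * x * (x * y * (x * y) * e) := by rw [hxy]
        _ = (x * x * x) * x * y * y * e := by ac_rfl
        _ = x * y * (x * y) * e := by rw [cube]; ac_rfl
        _ = e := hxy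
    intro x y
    refine ⟨fun h => ⟨key x y h, key y x (by rw [mul_comm y x]; exact h)⟩, ?_⟩
    rintro ⟨h1, h2⟩
    calc x * y * (x * y) * e = x * x * (y * y * e) := by ac_rfl
      _ = e := by rw [h2, h1]
  have hnegF : ∀ x, tneg * x ∈ S → x * x * e = e := fun x hx => by
    rw [← nsq]; exact (hg _ hx).1
  let h : G → SignType := fun x => if x ∈ S then 1 else if tneg * x ∈ S then -1 else 0
  have p1 : ∀ x, x ∈ S → h x = 1 := fun x hx => by simp [h, hx]
  have p2 : ∀ x, tneg * x ∈ S → h x = -1 := fun x hx => by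
    have : x ∉ S := fun hh => hnot x hh hx
    simp [h, hx, this]
  have p3 : ∀ x, x * x * e ≠ e → h x = 0 := fun x hx => by
    have h1 : x ∉ S := fun hh => hx (hg x hh).1
    have h2 : tneg * x ∉ S := fun hh => hx (hnegF x hh)
    simp [h, h1, h2]
  have p4 : ∀ x, h x = 0 ↔ x * x * e ≠ e := by
    intro x
    refine ⟨fun h0 hx => ?_, p3 x⟩
    rcases hor x hx with hh | hh
    · rw [p1 x hh] at h0; exact absurd h0 (by decide)
    · rw [p2 x hh] at h0; exact absurd h0 (by decide)
  refine ⟨h, ⟨?_, p1 1 S.one_mem, ?_, p2 _ (by rw [nn]; exact S.one_mem)⟩, p4⟩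
  · intro x y
    by_cases hx : x * x * e = e
    · by_cases hy : y * y * e = e
      · rcases hor x hx with h1 | h1 <;> rcases hor y hy with h2 | h2
        · rw [p1 x h1, p1 y h2, p1 _ (S.mul_mem h1 h2)]; rfl
        · rw [p1 x h1, p2 y h2, p2]; · rfl
          have := S.mul_mem h1 h2
          rwa [mul_left_comm] at this
        · rw [p2 x h1, p1 y h2, p2]; · rfl
          have := S.mul_mem h1 h2
          rwa [mul_assoc] at this
        · rw [p2 x h1, p2 y h2, p1]; · rfl
          have := S.mul_mem h1 h2
          rwa [mul_assoc, mul_left_comm x, nnx] at this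
      · rw [p3 y hy, p3 _ (fun hh => hy ((hmulF x y).1 hh).2), mul_zero]
    · rw [p3 x hx, p3 _ (fun hh => hx ((hmulF x y).1 hh).1), zero_mul]
  · refine p3 _ fun hh => he ?_
    rw [mul_tzero, mul_comm, mul_tzero] at hh
    exact hh.symm

/-- Divisibility and zero-set inclusion for elements of a ternary semigroup. -/
theorem stmt_2 {G : Type u} [TernarySemigroup G] (a b : G) :
    List.TFAE
      [ ∀ h : G → SignType, IsTSChar h → h a = 0 → h b = 0,
        (a * a) * (b * b) = b * b,
        ∃ x : G, b = a * x,
        {y : G | ∃ t : G, y = b * t} ⊆ {y : G | ∃ t : G, y = a * t} ] := by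
  tfae_have 1 → 2 := by
    intro H
    by_contra hne
    have he : b * b ≠ tzero := fun h0 => hne (by rw [h0, mul_tzero])
    obtain ⟨h, hc, hz⟩ := ts_exists_char (b * b) he
    refine (hz b).1 (H h hc ((hz a).2 hne)) ?_
    rw [← mul_assoc, cube]
  tfae_have 2 → 3 := by
    intro h
    refine ⟨a * b, ?_⟩
    calc b = b * b * b := (cube b).symm
      _ = a * a * (b * b) * b := by rw [h]
      _ = a * (a * (b * b * b)) := by ac_rfl
      _ = a * (a * b) := by rw [cube]
  tfae_have 3 → 4 := by
    rintro ⟨x, rfl⟩ y ⟨t, rfl⟩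
    exact ⟨x * t, mul_assoc _ _ _⟩
  tfae_have 4 → 3 := by
    intro h
    exact h ⟨1, (mul_one b).symm⟩
  tfae_have 3 → 1 := by
    rintro ⟨x, rfl⟩ h hc ha
    rw [hc.1, ha, zero_mul]
  tfae_finish
end

section
/- Let T be a ternary semigroup. The following are equivalent: (1) the family of zero-sets {Z(a) : a ∈ T}, where Z(a) = {h ∈ Hom_TS(T,3) : h(a) = 0}, is totally ordered under inclusion; (2) for all a, b ∈ T, a²b² = a² or a²b² = b²; (3) for all a, b ∈ T, a divides b or b divides a; (4) every proper ideal of T is prime; (5) the set of ideals of T is totally ordered under inclusion. -/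
universe u

open TernarySemigroup

/-- An ideal of a ternary semigroup: a nonempty subset closed under multiplication
by arbitrary elements. -/
def TSIdeal {G : Type u} [TernarySemigroup G] (I : Set G) : Prop :=
  I.Nonempty ∧ ∀ x ∈ I, ∀ y : G, x * y ∈ I

/-- Subsets `S` that are positive cones for a partial character modulo the idempotent `e`. -/
def GoodCone {G : Type u} [TernarySemigroup G] (e : G) (S : Set G) : Prop :=
  (1 : G) ∈ S ∧ (∀ x ∈ S, ∀ y ∈ S, x * y ∈ S) ∧ (∀ s ∈ S, ∀ y, y * e = s * e → y ∈ S) ∧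
  (∀ x ∈ S, x * x * e = e) ∧ (tneg : G) ∉ S

theorem exists_max_cone {G : Type u} [TernarySemigroup G] (e : G) (he : e * e = e)
    (h0 : e ≠ tzero) : ∃ S : Set G, GoodCone e S ∧
      ∀ x, x * x * e = e → x ∈ S ∨ tneg * x ∈ S := by
  have base : GoodCone e {y : G | y * e = e} := by
    refine ⟨one_mul e, ?_, ?_, ?_, ?_⟩
    · intro x hx y hy
      simp only [Set.mem_setOf_eq] at *
      rw [mul_assoc, hy, hx]
    · intro s hs y hy
      simp only [Set.mem_setOf_eq] at *
      rw [hy, hs]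
    · intro x hx
      simp only [Set.mem_setOf_eq] at *
      rw [mul_assoc, hx, hx]
    · intro h
      exact h0 (eq_tzero_of_eq_tneg_mul e h.symm)
  obtain ⟨S, -, hS⟩ := zorn_subset_nonempty {S : Set G | GoodCone e S} (by
    intro c hc hch hne
    obtain ⟨S0, hS0⟩ := hne
    refine ⟨⋃₀ c, ⟨⟨S0, hS0, (hc hS0).1⟩, ?_, ?_, ?_, ?_⟩, fun s hs => Set.subset_sUnion_of_mem hs⟩
    · rintro x ⟨A, hA, hx⟩ y ⟨B, hB, hy⟩
      rcases hch.total hA hB with h | h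
      · exact ⟨B, hB, (hc hB).2.1 x (h hx) y hy⟩
      · exact ⟨A, hA, (hc hA).2.1 x hx y (h hy)⟩
    · rintro s ⟨A, hA, hs⟩ y hy
      exact ⟨A, hA, (hc hA).2.2.1 s hs y hy⟩
    · rintro x ⟨A, hA, hx⟩
      exact (hc hA).2.2.2.1 x hx
    · rintro ⟨A, hA, hx⟩
      exact (hc hA).2.2.2.2 hx) _ base
  have hg : GoodCone e S := hS.prop
  refine ⟨S, hg, ?_⟩
  obtain ⟨g1, gm, gs, gF, gn⟩ := hg
  intro x hx
  by_contra hcon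
  rw [not_or] at hcon
  have good : GoodCone e {y : G | y ∈ S ∨ x * y ∈ S} := by
    refine ⟨Or.inl g1, ?_, ?_, ?_, ?_⟩
    · rintro y (hy | hy) z (hz | hz)
      · exact Or.inl (gm y hy z hz)
      · right
        have := gm _ hy _ hz
        rwa [mul_left_comm] at this
      · right
        have := gm _ hy _ hz
        rwa [mul_assoc] at this
      · left
        refine gs _ (gm _ hy _ hz) _ ?_
        calc y * z * e = y * z * (x * x * e) := by rw [hx]
          _ = x * y * (x * z) * e := by ac_rfl
    · rintro s (hs | hs) y hy
      · exact Or.inl (gs s hs y hy)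
      · right
        refine gs _ hs _ ?_
        rw [mul_assoc, hy, mul_assoc]
    · rintro y (hy | hy)
      · exact gF y hy
      · have := gF _ hy
        calc y * y * e = y * y * (x * x * e) := by rw [hx]
          _ = x * y * (x * y) * e := by ac_rfl
          _ = e := this
    · rintro (h | h)
      · exact gn h
      · rw [mul_comm] at h
        exact hcon.2 h
  have hle := hS.le_of_ge (y := {y : G | y ∈ S ∨ x * y ∈ S}) good (fun y hy => Or.inl hy)
  refine hcon.1 (hle (Or.inr (gs 1 g1 _ ?_)))
  rw [hx, one_mul]

theorem exists_separating {G : Type u} [TernarySemigroup G] (a b : G)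
    (hab : ¬ ∃ x : G, b = a * x) : ∃ h : G → SignType, IsTSChar h ∧ h a = 0 ∧ h b ≠ 0 := by
  classical
  set e := b * b with hedef
  have heb : e * b = b := cube b
  have he : e * e = e := by
    calc e * e = e * b * b := (mul_assoc e b b).symm
      _ = e := by rw [heb]
  have h0 : e ≠ tzero := by
    intro h
    apply hab
    refine ⟨tzero, ?_⟩
    rw [mul_tzero, ← heb, h, mul_comm, mul_tzero]
  obtain ⟨S, ⟨g1, gm, gs, gF, gn⟩, hS⟩ := exists_max_cone e he h0
  have neg2 : ∀ x : G, tneg * (tneg * x) = x := fun x => by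
    rw [← mul_assoc, tneg_mul_tneg, one_mul]
  have Fl : ∀ x y : G, x * y * (x * y) * e = e → x * x * e = e := by
    intro x y h
    calc x * x * e = x * x * (x * y * (x * y) * e) := by rw [h]
      _ = (x * x * x) * y * (x * y) * e := by ac_rfl
      _ = e := by rw [cube, h]
  have Fm : ∀ x y : G, x * x * e = e → y * y * e = e → x * y * (x * y) * e = e := by
    intro x y hx hy
    calc x * y * (x * y) * e = x * x * (y * y * e) := by ac_rfl
      _ = e := by rw [hy, hx]
  have canc : ∀ x y : G, x ∈ S → x * y ∈ S → y ∈ S := by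
    intro x y hx hxy
    refine gs _ (gm x hx _ hxy) _ ?_
    calc y * e = y * (x * x * e) := by rw [gF x hx]
      _ = x * (x * y) * e := by ac_rfl
  refine ⟨fun x => if x * x * e = e then (if x ∈ S then 1 else -1) else 0,
    ⟨?_, ?_, ?_, ?_⟩, ?_, ?_⟩
  · intro x y
    by_cases hx : x * x * e = e
    · by_cases hy : y * y * e = e
      · have hxy := Fm x y hx hy
        by_cases sx : x ∈ S
        · by_cases sy : y ∈ S
          · simp [hx, hy, hxy, sx, sy, gm x sx y sy]
          · have : x * y ∉ S := fun h => sy (canc x y sx h)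
            simp [hx, hy, hxy, sx, sy, this]
        · by_cases sy : y ∈ S
          · have : x * y ∉ S := fun h => sx (canc y x sy (by rwa [mul_comm]))
            simp [hx, hy, hxy, sx, sy, this]
          · have : x * y ∈ S := by
              have h1 := gm _ ((hS x hx).resolve_left sx) _ ((hS y hy).resolve_left sy)
              have h2 : tneg * x * (tneg * y) = x * y := by
                rw [mul_mul_mul_comm, tneg_mul_tneg, one_mul]
              rwa [h2] at h1
            simp [hx, hy, hxy, sx, sy, this]
      · have hxy : ¬ x * y * (x * y) * e = e := fun h => hy (Fl y x (by rwa [mul_comm y x]))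
        simp [hy, hxy]
    · have hxy : ¬ x * y * (x * y) * e = e := fun h => hx (Fl x y h)
      simp [hx, hxy]
  · simp [g1]
  · have : ¬ ((tzero : G) * tzero * e = e) := by
      rw [mul_tzero, mul_comm, mul_tzero]
      exact fun h => h0 h.symm
    simp [this]
  · simp [tneg_mul_tneg, gn]
  · have : ¬ (a * a * e = e) := by
      intro h
      apply hab
      refine ⟨a * e * b, ?_⟩
      calc b = a * a * e * b := by rw [h, heb]
        _ = a * (a * e * b) := by ac_rfl
    simp [this]
  · have : b * b * e = e := he
    simp only [this, if_true]
    split_ifs <;> decide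

/-- Characterizations of ternary semigroups whose zero-sets (equivalently, ideals) are
totally ordered under inclusion. -/
theorem stmt_3 (G : Type u) [TernarySemigroup G] :
    List.TFAE
      [ ∀ a b : G,
          {h : G → SignType | IsTSChar h ∧ h a = 0} ⊆ {h : G → SignType | IsTSChar h ∧ h b = 0} ∨
          {h : G → SignType | IsTSChar h ∧ h b = 0} ⊆ {h : G → SignType | IsTSChar h ∧ h a = 0},
        ∀ a b : G, a * a * (b * b) = a * a ∨ a * a * (b * b) = b * b,
        ∀ a b : G, (∃ x : G, b = a * x) ∨ (∃ x : G, a = b * x),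
        ∀ I : Set G, TSIdeal I → I ≠ Set.univ → ∀ a b : G, a * b ∈ I → a ∈ I ∨ b ∈ I,
        ∀ I J : Set G, TSIdeal I → TSIdeal J → I ⊆ J ∨ J ⊆ I ] := by
  tfae_have 1 → 3 := by
    intro H a b
    by_contra hcon
    rw [not_or] at hcon
    rcases H a b with h | h
    · obtain ⟨χ, hχ, ha, hb⟩ := exists_separating a b hcon.1
      exact hb (h ⟨hχ, ha⟩).2
    · obtain ⟨χ, hχ, ha, hb⟩ := exists_separating b a hcon.2
      exact hb (h ⟨hχ, ha⟩).2
  tfae_have 3 → 2 := by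
    have key : ∀ a x : G, a * a * (a * x * (a * x)) = a * x * (a * x) := by
      intro a x
      calc a * a * (a * x * (a * x)) = (a * a * a) * x * (a * x) := by ac_rfl
        _ = _ := by rw [cube]
    intro H a b
    rcases H a b with ⟨x, rfl⟩ | ⟨x, rfl⟩
    · exact Or.inr (key a x)
    · left
      rw [mul_comm]
      exact key b x
  tfae_have 2 → 1 := by
    intro H a b
    rcases H a b with h | h
    · right
      rintro χ ⟨hχ, hb⟩
      refine ⟨hχ, ?_⟩
      have := congrArg χ h
      simpa [hχ.1, hb] using this.symm
    · left
      rintro χ ⟨hχ, hb⟩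
      refine ⟨hχ, ?_⟩
      have := congrArg χ h
      simpa [hχ.1, hb] using this.symm
  tfae_have 3 → 4 := by
    intro H I hI _ a b hab
    rcases H a b with ⟨x, hx⟩ | ⟨x, hx⟩
    · right
      have h1 := hI.2 _ hab (x * b)
      have : a * b * (x * b) = b := by
        calc a * b * (x * b) = (a * x) * b * b := by ac_rfl
          _ = b := by rw [← hx, cube]
      rwa [this] at h1
    · left
      have h1 := hI.2 _ hab (x * a)
      have : a * b * (x * a) = a := by
        calc a * b * (x * a) = (b * x) * a * a := by ac_rfl
          _ = a := by rw [← hx, cube]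
      rwa [this] at h1
  tfae_have 4 → 3 := by
    intro H a b
    have hI : TSIdeal {y : G | ∃ x, y = a * b * x} :=
      ⟨⟨_, 1, rfl⟩, by
        rintro _ ⟨x, rfl⟩ y
        exact ⟨x * y, mul_assoc _ _ _⟩⟩
    by_cases hu : {y : G | ∃ x, y = a * b * x} = Set.univ
    · have : b ∈ {y : G | ∃ x, y = a * b * x} := hu ▸ Set.mem_univ b
      obtain ⟨x, hx⟩ := this
      exact Or.inl ⟨b * x, by rw [← mul_assoc]; exact hx⟩
    · rcases H _ hI hu a b ⟨1, (mul_one _).symm⟩ with ⟨x, hx⟩ | ⟨x, hx⟩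
      · exact Or.inr ⟨a * x, by rw [← mul_assoc, mul_comm b a]; exact hx⟩
      · exact Or.inl ⟨b * x, by rw [← mul_assoc]; exact hx⟩
  tfae_have 3 → 5 := by
    intro H I J hI hJ
    by_contra hcon
    rw [not_or, Set.not_subset, Set.not_subset] at hcon
    obtain ⟨⟨a, ha, ha'⟩, b, hb, hb'⟩ := hcon
    rcases H a b with ⟨x, rfl⟩ | ⟨x, rfl⟩
    · exact hb' (hI.2 _ ha x)
    · exact ha' (hJ.2 _ hb x)
  tfae_have 5 → 3 := by
    intro H a b
    have hI : ∀ a : G, TSIdeal {y : G | ∃ x, y = a * x} := fun a =>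
      ⟨⟨_, 1, rfl⟩, by
        rintro _ ⟨x, rfl⟩ y
        exact ⟨x * y, mul_assoc _ _ _⟩⟩
    rcases H _ _ (hI a) (hI b) with h | h
    · exact Or.inr (h ⟨1, (mul_one a).symm⟩)
    · exact Or.inl (h ⟨1, (mul_one b).symm⟩)
  tfae_finish
end

section
/- Let G be a ternary semigroup with a ternary relation D satisfying axioms [RS0] (c ∈ D(a,b) iff c ∈ D(b,a)) and [RS2] (a ∈ D(b,c) implies ad ∈ D(bd,cd)), and let D^t be defined from D by the transversal clause. Then the strong associativity axiom [RS3] (if a ∈ D^t(b,c) and c ∈ D^t(d,e), then there exists x ∈ D^t(b,d) with a ∈ D^t(x,e)) holds if and only if [RS3′] holds: for all a, b, c, d, if D^t(a,b) ∩ D^t(c,d) ≠ ∅ then D^t(a,-c) ∩ D^t(-b,d) ≠ ∅. -/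
universe u

open TernarySemigroup

/-- The transversal representation relation derived from a ternary relation `D`
(`Dt D a b c` means `a ∈ D^t(b,c)`, where `D c a b` means `c ∈ D(a,b)`). -/
def Dt {G : Type u} [TernarySemigroup G] (D : G → G → G → Prop) (a b c : G) : Prop :=
  D a b c ∧ D (tneg * b) (tneg * a) c ∧ D (tneg * c) b (tneg * a)

/-- In the presence of [RS0] and [RS2], strong associativity [RS3] is equivalent to [RS3']. -/
theorem stmt_4 {G : Type u} [TernarySemigroup G] (D : G → G → G → Prop)
    (rs0 : ∀ a b c : G, D c a b ↔ D c b a)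
    (rs2 : ∀ a b c d : G, D a b c → D (a * d) (b * d) (c * d)) :
    (∀ a b c d e : G, Dt D a b c → Dt D c d e → ∃ x : G, Dt D x b d ∧ Dt D a x e) ↔
    (∀ a b c d : G, (∃ x : G, Dt D x a b ∧ Dt D x c d) →
      ∃ y : G, Dt D y a (tneg * c) ∧ Dt D y (tneg * b) d) := by
  have nn : ∀ x : G, tneg * (tneg * x) = x := fun x => by
    rw [← mul_assoc, tneg_mul_tneg, one_mul]
  have negD : ∀ a b c : G, D a b c → D (tneg * a) (tneg * b) (tneg * c) := fun a b c h => by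
    have h' := rs2 a b c tneg h
    rwa [mul_comm a, mul_comm b, mul_comm c] at h'
  have swap : ∀ a b c : G, Dt D a b c → Dt D a c b := fun a b c h =>
    ⟨(rs0 _ _ _).1 h.1, (rs0 _ _ _).1 h.2.2, (rs0 _ _ _).1 h.2.1⟩
  have neg : ∀ a b c : G, Dt D a b c → Dt D (tneg * a) (tneg * b) (tneg * c) :=
    fun a b c h => ⟨negD _ _ _ h.1, negD _ _ _ h.2.1, negD _ _ _ h.2.2⟩
  have shift : ∀ a b c : G, Dt D a b c → Dt D b a (tneg * c) := fun a b c h => by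
    refine ⟨?_, negD _ _ _ h.1, (rs0 _ _ _).1 ?_⟩
    · have := negD _ _ _ h.2.1
      rwa [nn, nn] at this
    · have := negD _ _ _ h.2.2
      rwa [nn a] at this
  constructor
  · rintro h a b c d ⟨x, h1, h2⟩
    obtain ⟨y, hy1, hy2⟩ := h a (tneg * b) x d c (swap _ _ _ (shift _ _ _ h1)) (swap _ _ _ h2)
    exact ⟨y, shift _ _ _ hy2, hy1⟩
  · intro h a b c d e h1 h2
    obtain ⟨y, hy1, hy2⟩ := h (tneg * b) a d e
      ⟨c, swap _ _ _ (shift _ _ _ (swap _ _ _ h1)), h2⟩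
    have k1 := neg _ _ _ hy1
    have k2 := neg _ _ _ hy2
    rw [nn, nn] at k1
    rw [nn] at k2
    have k3 := shift _ _ _ k2
    rw [nn e] at k3
    exact ⟨tneg * y, k1, k3⟩
end

section
/- Let G be a ternary semigroup and let H be a nonempty set of TS-characters of G that separates points (for a ≠ b in G there is h ∈ H with h(a) ≠ h(b)). Define the ternary relation D_H on G by: a ∈ D_H(b,c) iff for every h ∈ H, h(a) = 0 or h(a) = h(b) or h(a) = h(c). Then D_H satisfies all the real semigroup axioms except possibly strong associativity; that is, D_H satisfies [RS0], [RS1], [RS2], [RS4], [RS5], [RS6], [RS7] and [RS8]. -/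
universe u

open TernarySemigroup

/-- The representation relation induced on `G` by a set `H` of TS-characters:
`DH H a b c` means `a ∈ D_H(b,c)`. -/
def DH {G : Type u} [TernarySemigroup G] (H : Set (G → SignType)) (a b c : G) : Prop :=
  ∀ h ∈ H, h a = 0 ∨ h a = h b ∨ h a = h c

/-- The relation induced by a nonempty point-separating set of TS-characters satisfies all
real semigroup axioms except possibly strong associativity [RS3]: it satisfies
[RS0], [RS1], [RS2], [RS4], [RS5], [RS6], [RS7], [RS8]. -/
theorem stmt_5 {G : Type u} [TernarySemigroup G] (H : Set (G → SignType))
    (hne : H.Nonempty) (hchar : ∀ h ∈ H, IsTSChar h)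
    (hsep : ∀ a b : G, a ≠ b → ∃ h ∈ H, h a ≠ h b) :
    (∀ a b c : G, DH H c a b ↔ DH H c b a) ∧
    (∀ a b : G, DH H a a b) ∧
    (∀ a b c d : G, DH H a b c → DH H (a * d) (b * d) (c * d)) ∧
    (∀ a b c d e : G, DH H e (c * c * a) (d * d * b) → DH H e a b) ∧
    (∀ a b c d e : G, a * d = b * d → a * e = b * e → DH H c d e → a * c = b * c) ∧
    (∀ a b c : G, DH H c a b → Dt (DH H) c (c * c * a) (c * c * b)) ∧
    (∀ a b : G, (∃ x : G, Dt (DH H) x a (tneg * b) ∧ Dt (DH H) x b (tneg * a)) → a = b) ∧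
    (∀ a b c : G, DH H a b c → DH H (a * a) (b * b) (c * c)) := by
  have sep : ∀ a b : G, (∀ h ∈ H, h a = h b) → a = b := by
    intro a b hab
    by_contra hn
    obtain ⟨h, hh, hx⟩ := hsep a b hn
    exact hx (hab h hh)
  refine ⟨?_, ?_, ?_, ?_, ?_, ?_, ?_, ?_⟩
  · intro a b c
    constructor <;> intro H1 h hh <;> have := H1 h hh <;> tauto
  · intro a b h hh
    exact Or.inr (Or.inl rfl)
  · intro a b c d H1 h hh
    have h1 := H1 h hh
    have hm := (hchar h hh).1
    simp only [hm]
    generalize h a = a at *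
    generalize h b = b at *
    generalize h c = c at *
    generalize h d = d at *
    clear hm
    revert a b c d
    decide
  · intro a b c d e H1 h hh
    have h1 := H1 h hh
    have hm := (hchar h hh).1
    simp only [hm] at h1
    revert h1
    generalize h a = a
    generalize h b = b
    generalize h c = c
    generalize h d = d
    generalize h e = e
    revert a b c d e
    decide
  · intro a b c d e had hae H1
    apply sep
    intro h hh
    have h1 := H1 h hh
    have hm := (hchar h hh).1
    have h2 := congrArg h had
    have h3 := congrArg h hae
    simp only [hm] at h2 h3 ⊢
    rcases h1 with h1 | h1 | h1 <;> simp [h1, h2, h3]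
  · intro a b c H1
    have key : ∀ a b c : SignType, (c = 0 ∨ c = a ∨ c = b) →
        (c = 0 ∨ c = c * c * a ∨ c = c * c * b) ∧
        (-1 * (c * c * a) = 0 ∨ -1 * (c * c * a) = -1 * c ∨ -1 * (c * c * a) = c * c * b) ∧
        (-1 * (c * c * b) = 0 ∨ -1 * (c * c * b) = c * c * a ∨ -1 * (c * c * b) = -1 * c) := by
      decide
    refine ⟨?_, ?_, ?_⟩ <;> intro h hh <;> obtain ⟨hm, -, -, hn⟩ := hchar h hh <;>
      have h1 := key _ _ _ (H1 h hh) <;> simp only [hm, hn]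
    · exact h1.1
    · exact h1.2.1
    · exact h1.2.2
  · rintro a b ⟨x, ⟨-, p2, p3⟩, -, q2, q3⟩
    apply sep
    intro h hh
    obtain ⟨hm, -, -, hn⟩ := hchar h hh
    have key : ∀ a b x : SignType,
        (-1 * a = 0 ∨ -1 * a = -1 * x ∨ -1 * a = -1 * b) →
        (-1 * (-1 * a) = 0 ∨ -1 * (-1 * a) = b ∨ -1 * (-1 * a) = -1 * x) → a = 0 ∨ a = b := by
      decide
    have p2 := p2 h hh
    have p3 := p3 h hh
    have q2 := q2 h hh
    have q3 := q3 h hh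
    simp only [hm, hn] at p2 p3 q2 q3
    rcases key _ _ _ p2 q3 with h1 | h1
    · rcases key _ _ _ q2 p3 with h2 | h2
      · rw [h1, h2]
      · exact h2.symm
    · exact h1
  · intro a b c H1 h hh
    have hm := (hchar h hh).1
    simp only [hm]
    rcases H1 h hh with h1 | h1 | h1 <;> simp [h1]
end

section
/- Let G be a ternary semigroup satisfying condition [Z], and let X ⊆ Hom_TS(G,3) be such that (X,G) is a q-fan. Define D^t_X by: c ∈ D^t_X(a,b) iff for every h ∈ X, either h(c) = 0 and h(a) = -h(b), or h(c) ≠ 0 and (h(c) = h(a) or h(c) = h(b)). Then for all a, b ∈ G: (i) if a²b² = b² and a² ≠ b² then D^t_X(a,b) = {a}; (ii) if a²b² = a² and a² ≠ b² then D^t_X(a,b) = {b}; (iii) if a² = b² and b ≠ -a then D^t_X(a,b) = {a, b}; (iv) if b = -a then D^t_X(a,b) = a·G. -/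
universe u

open TernarySemigroup

/-- Condition [Z]: the zero sets of elements are totally ordered, algebraically:
`a²b² = a²` or `a²b² = b²` for all `a, b`. -/
def CondZ (G : Type u) [TernarySemigroup G] : Prop :=
  ∀ a b : G, a * a * (b * b) = a * a ∨ a * a * (b * b) = b * b

/-- `(X, G)` is a q-fan: `X` is a nonempty set of TS-characters of `G`, closed under the
pointwise product of any three of its members, and separating points of `G`. -/
def IsQFan (G : Type u) [TernarySemigroup G] (X : Set (G → SignType)) : Prop :=
  X.Nonempty ∧ (∀ h ∈ X, IsTSChar h) ∧
  (∀ h₁ ∈ X, ∀ h₂ ∈ X, ∀ h₃ ∈ X, h₁ * h₂ * h₃ ∈ X) ∧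
  (∀ a b : G, a ≠ b → ∃ h ∈ X, h a ≠ h b)

/-- The transversal representation relation determined by a set `X` of characters:
`DtX X c a b` means `c ∈ D^t_X(a,b)`. -/
def DtX {G : Type u} [TernarySemigroup G] (X : Set (G → SignType)) (c a b : G) : Prop :=
  ∀ h ∈ X, (h c = 0 ∧ h a = -(h b)) ∨ (h c ≠ 0 ∧ (h c = h a ∨ h c = h b))

set_option synthInstance.maxSize 4000 in
set_option synthInstance.maxHeartbeats 400000 in
set_option maxHeartbeats 4000000 in
set_option maxRecDepth 100000 in
theorem qfan_case_one {G : Type u} [TernarySemigroup G]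
    (X : Set (G → SignType)) (hX : IsQFan G X) (a b : G)
    (h1 : a * a * (b * b) = b * b) (h2 : a * a ≠ b * b) (c : G) :
    DtX X c a b ↔ c = a := by
  obtain ⟨-, hC, hP, hS⟩ := hX
  have hz : ∀ h ∈ X, h a * h a * (h b * h b) = h b * h b := by
    intro h hh
    have hm := (hC h hh).1
    rw [← hm, ← hm, ← hm, h1]
  constructor
  · intro hc
    obtain ⟨g, hg, hne⟩ := hS _ _ h2
    rw [(hC g hg).1, (hC g hg).1] at hne
    have hgz := hz g hg
    have hgc := hc g hg
    by_contra hca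
    obtain ⟨h, hh, hne2⟩ := hS _ _ hca
    have hhz := hz h hh
    have hhc := hc h hh
    have e1 := hc _ (hP h hh h hh g hg)
    have e2 := hc _ (hP h hh g hg g hg)
    simp only [Pi.mul_apply] at e1 e2
    revert hne hgz hgc hne2 hhz hhc e1 e2
    generalize g a = ga
    generalize g b = gb
    generalize g c = gc
    generalize h a = ha
    generalize h b = hb
    generalize h c = hc
    revert ga gb gc ha hb hc
    decide
  · rintro rfl h hh
    have := hz h hh
    revert this
    generalize h c = ha
    generalize h b = hb
    revert ha hb
    decide

theorem dtX_symm {G : Type u} [TernarySemigroup G]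
    (X : Set (G → SignType)) (a b c : G) (hc : DtX X c a b) : DtX X c b a := by
  intro h hh
  rcases hc h hh with ⟨h1, h2⟩ | ⟨h1, h2⟩
  · exact Or.inl ⟨h1, by rw [h2, neg_neg]⟩
  · exact Or.inr ⟨h1, h2.symm⟩

theorem qfan_neg {G : Type u} [TernarySemigroup G] (h : G → SignType) (hh : IsTSChar h) (a : G) :
    h (tneg * a) = - h a := by
  rw [hh.1, hh.2.2.2, neg_one_mul]

set_option synthInstance.maxSize 4000 in
set_option synthInstance.maxHeartbeats 400000 in
set_option maxHeartbeats 4000000 in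
set_option maxRecDepth 100000 in
theorem qfan_case_three {G : Type u} [TernarySemigroup G]
    (X : Set (G → SignType)) (hX : IsQFan G X) (a b : G)
    (h1 : a * a = b * b) (h2 : b ≠ tneg * a) (c : G) :
    DtX X c a b ↔ c = a ∨ c = b := by
  obtain ⟨-, hC, hP, hS⟩ := hX
  have hz : ∀ h ∈ X, h a * h a = h b * h b := by
    intro h hh
    have hm := (hC h hh).1
    rw [← hm, ← hm, h1]
  constructor
  · intro hc
    obtain ⟨g, hg, hne⟩ := hS _ _ h2
    rw [qfan_neg g (hC g hg)] at hne
    have hgz := hz g hg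
    have hgab : g a = g b ∧ g c = g a ∧ g a ≠ 0 := by
      have hgc := hc g hg
      revert hne hgz hgc
      generalize g a = ga
      generalize g b = gb
      generalize g c = gc
      revert ga gb gc
      decide
    have key : ∀ h ∈ X, h c = h a ∨ (h c = h b ∧ h b = - h a ∧ h a ≠ 0) := by
      intro h hh
      have hhz := hz h hh
      have hhc := hc h hh
      have e1 := hc _ (hP h hh h hh g hg)
      simp only [Pi.mul_apply] at e1
      revert hgab hhz hhc e1
      generalize g a = ga
      generalize g b = gb
      generalize g c = gc
      generalize h a = ha
      generalize h b = hb
      generalize h c = hc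
      revert ga gb gc ha hb hc
      decide
    by_contra hcab
    rw [not_or] at hcab
    obtain ⟨h, hh, hne1⟩ := hS _ _ hcab.1
    obtain ⟨k, hk, hne2⟩ := hS _ _ hcab.2
    obtain ⟨p1, p2, p3⟩ := (key h hh).resolve_left hne1
    have q1 : k c = k a ∧ k b = - k a ∧ k a ≠ 0 := by
      have := key k hk
      have hkc := hc k hk
      have hkz := hz k hk
      revert this hne2 hkc hkz
      generalize k a = ga
      generalize k b = gb
      generalize k c = gc
      revert ga gb gc
      decide
    obtain ⟨q1, q2, q3⟩ := q1
    obtain ⟨r1, r2, r3⟩ := hgab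
    have e := hc _ (hP h hh k hk g hg)
    simp only [Pi.mul_apply] at e
    rw [p1, p2, q1, q2, r2, ← r1] at e
    revert e p3 q3 r3
    generalize h a = x
    generalize k a = y
    generalize g a = z
    revert x y z
    decide
  · rintro (rfl | rfl) h hh
    · have := hz h hh
      revert this
      generalize h c = ha
      generalize h b = hb
      revert ha hb
      decide
    · have := hz h hh
      revert this
      generalize h c = ha
      generalize h a = hb
      revert ha hb
      decide

theorem qfan_case_four {G : Type u} [TernarySemigroup G]
    (X : Set (G → SignType)) (hX : IsQFan G X) (a c : G) :
    DtX X c a (tneg * a) ↔ ∃ x : G, c = a * x := by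
  obtain ⟨-, hC, hP, hS⟩ := hX
  constructor
  · intro hc
    refine ⟨a * c, ?_⟩
    by_contra hne
    obtain ⟨h, hh, hne⟩ := hS _ _ hne
    have := hc h hh
    rw [qfan_neg h (hC h hh)] at this
    rw [(hC h hh).1, (hC h hh).1] at hne
    revert this hne
    generalize h a = ha
    generalize h c = hc
    revert ha hc
    decide
  · rintro ⟨x, rfl⟩ h hh
    rw [qfan_neg h (hC h hh), (hC h hh).1]
    generalize h a = ha
    generalize h x = hc
    revert ha hc
    decide

/-- Explicit description of transversal representation in a q-fan over a ternary semigroup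
satisfying condition [Z]. -/
theorem stmt_6 {G : Type u} [TernarySemigroup G] (hZ : CondZ G)
    (X : Set (G → SignType)) (hX : IsQFan G X) (a b : G) :
    ((a * a * (b * b) = b * b ∧ a * a ≠ b * b) → {c : G | DtX X c a b} = {a}) ∧
    ((a * a * (b * b) = a * a ∧ a * a ≠ b * b) → {c : G | DtX X c a b} = {b}) ∧
    ((a * a = b * b ∧ b ≠ tneg * a) → {c : G | DtX X c a b} = {a, b}) ∧
    (b = tneg * a → {c : G | DtX X c a b} = {y : G | ∃ x : G, y = a * x}) := by
  refine ⟨?_, ?_, ?_, ?_⟩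
  · rintro ⟨h1, h2⟩
    ext c
    exact qfan_case_one X hX a b h1 h2 c
  · rintro ⟨h1, h2⟩
    ext c
    exact Iff.trans ⟨dtX_symm X a b c, dtX_symm X b a c⟩
      (qfan_case_one X hX b a (by rw [mul_comm, h1]) h2.symm c)
  · rintro ⟨h1, h2⟩
    ext c
    exact qfan_case_three X hX a b h1 h2 c
  · rintro rfl
    ext c
    exact qfan_case_four X hX a c
end

section
/- Let G be a ternary semigroup satisfying condition [Z], and let X ⊆ Hom_TS(G,3) be such that (X,G) is a q-fan. Define D_X by: c ∈ D_X(a,b) iff for every h ∈ X, h(c) = 0 or h(c) = h(a) or h(c) = h(b). Then for all a, b ∈ G: D_X(a,b) = a·Id(G) ∪ b·Id(G) ∪ {x ∈ G : xa = -xb and x = a²x}, where Id(G) = {x² : x ∈ G}. -/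
universe u

open TernarySemigroup

/-- A sign satisfying the representation condition but not coming from the first entry. -/
lemma sign_first : ∀ c a b : SignType, (c = 0 ∨ c = a ∨ c = b) → c ≠ a * (c * c) →
    c ≠ 0 ∧ b = c ∧ a ≠ c := by decide

lemma sign_second : ∀ c d a e : SignType, c ≠ 0 → d ≠ 0 → a ≠ c → e ≠ d →
    (c * c * d = 0 ∨ c * c * d = a * a * d ∨ c * c * d = c * c * e) → a = -c := by decide

lemma sign_third : ∀ c d p q r : SignType, c ≠ 0 → d ≠ 0 → (p = 0 ∨ p = q ∨ p = r) →
    (p * c * d = 0 ∨ p * c * d = q * -c * d ∨ p * c * d = r * c * -d) →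
    p * q = -1 * (p * r) ∧ p = q * q * p := by decide

lemma sign_easy : ∀ p q r : SignType, p * q = -1 * (p * r) → p = q * q * p →
    (p = 0 ∨ p = q ∨ p = r) := by decide

lemma sign_sq : ∀ a x : SignType, a * (x * x) = 0 ∨ a * (x * x) = a := by decide

/-- Explicit description of the representation relation in a q-fan over a ternary semigroup
satisfying condition [Z]: `D_X(a,b) = a·Id(G) ∪ b·Id(G) ∪ {x | xa = -xb ∧ x = a²x}`. -/
theorem stmt_7 {G : Type u} [TernarySemigroup G] (hZ : CondZ G)
    (X : Set (G → SignType)) (hX : IsQFan G X) (a b : G) :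
    {c : G | ∀ h ∈ X, h c = 0 ∨ h c = h a ∨ h c = h b} =
      {c : G | ∃ x : G, c = a * (x * x)} ∪ {c : G | ∃ x : G, c = b * (x * x)} ∪
      {c : G | c * a = tneg * (c * b) ∧ c = a * a * c} := by
  obtain ⟨-, hc, h3, hs⟩ := hX
  ext c
  simp only [Set.mem_ofPred_eq, Set.mem_union]
  constructor
  · intro hD
    by_cases hA : c = a * (c * c)
    · exact Or.inl (Or.inl ⟨c, hA⟩)
    by_cases hB : c = b * (c * c)
    · exact Or.inl (Or.inr ⟨c, hB⟩)
    right
    obtain ⟨f, hf, hfA⟩ := hs _ _ hA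
    obtain ⟨g, hg, hgB⟩ := hs _ _ hB
    rw [(hc f hf).1, (hc f hf).1] at hfA
    rw [(hc g hg).1, (hc g hg).1] at hgB
    obtain ⟨f0, fb, fa⟩ := sign_first _ _ _ (hD f hf) hfA
    obtain ⟨g0, ga, gb⟩ := sign_first _ _ _ ((hD g hg).imp_right Or.symm) hgB
    have h1 := hD _ (h3 f hf f hf g hg)
    have h2 := hD _ (h3 g hg g hg f hf)
    simp only [Pi.mul_apply, fb, ga] at h1 h2
    have fa' := sign_second _ _ _ _ f0 g0 fa gb h1
    have gb' := sign_second _ _ _ _ g0 f0 gb fa (h2.imp_right Or.symm)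
    have key : ∀ h ∈ X, h c * h a = -1 * (h c * h b) ∧ h c = h a * h a * h c := by
      intro h hh
      have h4 := hD _ (h3 h hh f hf g hg)
      simp only [Pi.mul_apply, fb, ga, fa', gb'] at h4
      exact sign_third _ _ _ _ _ f0 g0 (hD h hh) h4
    constructor
    · by_contra hne
      obtain ⟨h, hh, hn⟩ := hs _ _ hne
      simp only [(hc h hh).1, (hc h hh).2.2.2] at hn
      exact hn (key h hh).1
    · by_contra hne
      obtain ⟨h, hh, hn⟩ := hs _ _ hne
      simp only [(hc h hh).1] at hn
      exact hn (key h hh).2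
  · rintro ((⟨x, rfl⟩ | ⟨x, rfl⟩) | ⟨e1, e2⟩) h hh
    · simp only [(hc h hh).1]
      exact (sign_sq _ _).imp_right Or.inl
    · simp only [(hc h hh).1]
      exact (sign_sq _ _).imp_right Or.inr
    · have k1 := congrArg h e1
      have k2 := congrArg h e2
      simp only [(hc h hh).1, (hc h hh).2.2.2] at k1 k2
      exact sign_easy _ _ _ k1 k2
end

section
/- Let G be a ternary semigroup satisfying condition [Z]. Define the ternary relation D on G by the fan formula: c ∈ D(a,b) iff c ∈ a·Id(G) ∪ b·Id(G) or (ca = -cb and c = a²c), and define D^t from D by the transversal clause. Then D^t satisfies the case description: (i) if a²b² = b² and a² ≠ b² then D^t(a,b) = {a}; (ii) if a²b² = a² and a² ≠ b² then D^t(a,b) = {b}; (iii) if a² = b² and b ≠ -a then D^t(a,b) = {a, b}; (iv) if b = -a then D^t(a,b) = a·G. -/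
universe u

open TernarySemigroup

/-- The fan representation relation on a ternary semigroup:
`fanD c a b` means `c ∈ D(a,b)`, i.e. `c ∈ a·Id(G) ∪ b·Id(G)` or (`ca = -cb` and `c = a²c`). -/
def fanD {G : Type u} [TernarySemigroup G] (c a b : G) : Prop :=
  (∃ x : G, c = a * (x * x)) ∨ (∃ x : G, c = b * (x * x)) ∨
  (c * a = tneg * (c * b) ∧ c = a * a * c)

theorem fanD_symm_aux {G : Type u} [TernarySemigroup G] {c a b : G} (h : fanD c a b) :
    fanD c b a := by
  have hn := tneg_mul_tneg (G := G)
  rcases h with h | h | ⟨h1, h2⟩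
  · exact Or.inr (Or.inl h)
  · exact Or.inl h
  · refine Or.inr (Or.inr ⟨?_, ?_⟩)
    · rw [h1, ← mul_assoc, hn, one_mul]
    · grind

theorem Dt_symm_aux {G : Type u} [TernarySemigroup G] {c a b : G} (h : Dt fanD c a b) :
    Dt fanD c b a :=
  ⟨fanD_symm_aux h.1, fanD_symm_aux h.2.2, fanD_symm_aux h.2.1⟩

theorem Dt_left_aux {G : Type u} [TernarySemigroup G] {a b : G}
    (h : a * a * (b * b) = b * b) : Dt fanD a a b := by
  have hn := tneg_mul_tneg (G := G)
  have hb := cube b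
  refine ⟨Or.inl ⟨1, by simp⟩, Or.inl ⟨1, by simp⟩, Or.inr (Or.inr ⟨?_, ?_⟩)⟩
  · grind
  · grind

/-- Cancelling `-1`. -/
theorem tneg_cancel_aux {G : Type u} [TernarySemigroup G] {x y : G}
    (h : tneg * x = tneg * y) : x = y := by
  have hn := tneg_mul_tneg (G := G)
  rw [← one_mul x, ← one_mul y, ← hn, mul_assoc, h, mul_assoc]

theorem strict_aux {G : Type u} [TernarySemigroup G] {a b c : G}
    (h : a * a * (b * b) = b * b) (hne : a * a ≠ b * b) (hc : Dt fanD c a b) : c = a := by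
  have hn := tneg_mul_tneg (G := G)
  have ha := cube a
  have hb := cube b
  have hab : a * (b * b) ≠ a := by
    intro h'
    apply hne
    rw [← h, mul_assoc, h']
  have h1 : a = c * (a * a) := by
    rcases hc.2.1 with ⟨x, hx⟩ | ⟨x, hx⟩ | ⟨h1, h2⟩
    · have hx' : a = c * (x * x) := tneg_cancel_aux (by rw [hx, mul_assoc])
      have := cube c
      have := cube x
      grind
    · exfalso
      apply hab
      grind
    · exfalso
      apply hab
      have e1 : a * c = a * b := by grind
      have e2 : a = c * c * a := tneg_cancel_aux (by grind)
      grind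
  rcases hc.1 with ⟨x, hx⟩ | ⟨x, hx⟩ | ⟨_, h2⟩
  · grind
  · exfalso
    apply hab
    grind
  · grind

theorem equal_aux {G : Type u} [TernarySemigroup G] {a b c : G}
    (h : a * a = b * b) (hne : b ≠ tneg * a) (hc : Dt fanD c a b) : c = a ∨ c = b := by
  have hn := tneg_mul_tneg (G := G)
  have ha := cube a
  have hb := cube b
  have h0 : c = c * (a * a) := by
    rcases hc.1 with ⟨x, hx⟩ | ⟨x, hx⟩ | ⟨_, h2⟩
    · grind
    · grind
    · grind
  rcases hc.2.1 with ⟨x, hx⟩ | ⟨x, hx⟩ | ⟨h1, h2⟩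
  · left
    have hx' : a = c * (x * x) := tneg_cancel_aux (by rw [hx, mul_assoc])
    have := cube c
    have := cube x
    grind
  · exfalso
    apply hne
    have e1 : a * a = a * a * (x * x) := by
      have := cube x
      grind
    calc b = b * (a * a) := by grind
      _ = b * (x * x) := by rw [e1]; grind
      _ = tneg * a := hx.symm
  · right
    have e1 : a * c = a * b := by grind
    grind

/-- The transversal relation derived from the fan representation relation on a ternary
semigroup satisfying condition [Z] admits the explicit case description. -/
theorem stmt_8 {G : Type u} [TernarySemigroup G] (hZ : CondZ G) (a b : G) :
    ((a * a * (b * b) = b * b ∧ a * a ≠ b * b) → {c : G | Dt fanD c a b} = {a}) ∧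
    ((a * a * (b * b) = a * a ∧ a * a ≠ b * b) → {c : G | Dt fanD c a b} = {b}) ∧
    ((a * a = b * b ∧ b ≠ tneg * a) → {c : G | Dt fanD c a b} = {a, b}) ∧
    (b = tneg * a → {c : G | Dt fanD c a b} = {y : G | ∃ x : G, y = a * x}) := by
  have hn := tneg_mul_tneg (G := G)
  refine ⟨?_, ?_, ?_, ?_⟩
  · rintro ⟨h, hne⟩
    ext c
    simp only [Set.mem_setOf_eq, Set.mem_singleton_iff]
    refine ⟨strict_aux h hne, ?_⟩
    rintro rfl
    exact Dt_left_aux h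
  · rintro ⟨h, hne⟩
    have h' : b * b * (a * a) = a * a := by rw [mul_comm, h]
    ext c
    simp only [Set.mem_setOf_eq, Set.mem_singleton_iff]
    refine ⟨fun hc => strict_aux h' hne.symm (Dt_symm_aux hc), ?_⟩
    rintro rfl
    exact Dt_symm_aux (Dt_left_aux h')
  · rintro ⟨h, hne⟩
    have ha := cube a
    have hb := cube b
    have h1 : a * a * (b * b) = b * b := by grind
    have h2 : b * b * (a * a) = a * a := by grind
    ext c
    simp only [Set.mem_setOf_eq, Set.mem_insert_iff, Set.mem_singleton_iff]
    refine ⟨equal_aux h hne, ?_⟩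
    rintro (rfl | rfl)
    · exact Dt_left_aux h1
    · exact Dt_symm_aux (Dt_left_aux h2)
  · rintro rfl
    have ha := cube a
    ext c
    simp only [Set.mem_setOf_eq]
    constructor
    · rintro ⟨⟨x, hx⟩ | ⟨x, hx⟩ | ⟨_, h2⟩, _⟩
      · exact ⟨_, hx⟩
      · exact ⟨tneg * (x * x), by grind⟩
      · exact ⟨a * c, by grind⟩
    · rintro ⟨x, rfl⟩
      refine ⟨Or.inr (Or.inr ⟨?_, ?_⟩), Or.inr (Or.inl ⟨1, by simp⟩), Or.inl ⟨1, ?_⟩⟩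
      · grind
      · grind
      · rw [← mul_assoc, hn]; simp
end

section
/- Let G be a ternary semigroup satisfying condition [Z], and let D be the ternary relation on G defined by the fan formula: c ∈ D(a,b) iff c ∈ a·Id(G) ∪ b·Id(G) or (ca = -cb and c = a²c). Then (G,D) is a real semigroup, i.e., D satisfies all axioms [RS0]–[RS8] (including strong associativity [RS3]). -/
universe u

open TernarySemigroup

/-- The real semigroup axioms [RS0]-[RS8] for a ternary relation `D` on a ternary semigroup
(`D c a b` means `c ∈ D(a,b)`). -/
def IsRealSemigroup {G : Type u} [TernarySemigroup G] (D : G → G → G → Prop) : Prop :=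
  (∀ a b c : G, D c a b ↔ D c b a) ∧
  (∀ a b : G, D a a b) ∧
  (∀ a b c d : G, D a b c → D (a * d) (b * d) (c * d)) ∧
  (∀ a b c d e : G, Dt D a b c → Dt D c d e → ∃ x : G, Dt D x b d ∧ Dt D a x e) ∧
  (∀ a b c d e : G, D e (c * c * a) (d * d * b) → D e a b) ∧
  (∀ a b c d e : G, a * d = b * d → a * e = b * e → D c d e → a * c = b * c) ∧
  (∀ a b c : G, D c a b → Dt D c (c * c * a) (c * c * b)) ∧
  (∀ a b : G, (∃ x : G, Dt D x a (tneg * b) ∧ Dt D x b (tneg * a)) → a = b) ∧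
  (∀ a b c : G, D a b c → D (a * a) (b * b) (c * c))

namespace Fan
variable {G : Type u} [TernarySemigroup G]

/-- The order on elements induced by the order of their squares. -/
def le (a b : G) : Prop := a * a * (b * b) = a * a

theorem le_refl (a : G) : le a a := by
  have := cube a
  unfold le; grind

theorem le_trans {a b c : G} (h : le a b) (k : le b c) : le a c := by
  unfold le at *; grind

theorem le_total (hZ : CondZ G) (a b : G) : le a b ∨ le b a := by
  have := hZ a b
  unfold le; grind

theorem nn (a : G) : tneg * (tneg * a) = a := by
  rw [← mul_assoc, tneg_mul_tneg, one_mul]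

theorem sqn (a : G) : (tneg * a) * (tneg * a) = a * a := by
  rw [mul_mul_mul_comm, tneg_mul_tneg, one_mul]

theorem le_neg {a b : G} : le a (tneg * b) ↔ le a b := by
  unfold le; rw [sqn]

theorem neg_le {a b : G} : le (tneg * a) b ↔ le a b := by
  unfold le; rw [sqn]

theorem absorb {r p : G} (h : le r p) : p * p * r = r := by
  have := cube r
  unfold le at h
  calc p * p * r = p * p * (r * r * r) := by rw [this]
    _ = (r * r * (p * p)) * r := by ac_rfl
    _ = r := by rw [h, this]

theorem zero_mul' (x : G) : tzero * x = (tzero : G) := by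
  rw [mul_comm, mul_tzero]

theorem eq_zero_of_le {b : G} (h : le b (tzero : G)) : b = tzero := by
  have := absorb h
  rw [mul_tzero, zero_mul'] at this
  exact this.symm

theorem key {p q r : G} (h : fanD p q r) (h1 : le q p) (h2 : le r p) :
    p = q ∨ p = r ∨ (q = tneg * r ∧ le p r) := by
  have aux : ∀ s x : G, le s p → p = s * (x * x) → p = s := by
    intro s x hs hp
    have e := absorb hs
    have c := cube s
    have cx := cube x
    have e2 : p * p * s = s * (x * x) := by
      calc p * p * s = (s * (x * x)) * (s * (x * x)) * s := by rw [← hp]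
        _ = (s * s * s) * ((x * x * x) * x) := by ac_rfl
        _ = _ := by rw [c, cx]
    rw [hp, ← e2, e]
  rcases h with ⟨x, hx⟩ | ⟨x, hx⟩ | ⟨h3, h4⟩
  · exact Or.inl (aux q x h1 hx)
  · exact Or.inr (Or.inl (aux r x h2 hx))
  · right; right
    have e1 := absorb h1
    have e2 := absorb h2
    have e3 : q = tneg * r := by
     calc q = p * p * q := e1.symm
      _ = p * (p * q) := by ac_rfl
      _ = p * (tneg * (p * r)) := by rw [h3]
      _ = tneg * (p * p * r) := by ac_rfl
      _ = _ := by rw [e2]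
    refine ⟨e3, ?_⟩
    rw [← le_neg, ← e3]
    unfold le
    calc p * p * (q * q) = p * (q * q * p) := by ac_rfl
      _ = _ := by rw [← h4]

theorem D_self (a b : G) : fanD a a b := Or.inl ⟨1, by simp⟩
theorem D_self' (a b : G) : fanD a b a := Or.inr (Or.inl ⟨1, by simp⟩)
theorem D_opp {c a : G} (h : le c a) : fanD c a (tneg * a) := by
  refine Or.inr (Or.inr ⟨?_, (absorb h).symm⟩)
  rw [mul_left_comm c, nn]
theorem D_opp' {c a : G} (h : le c a) : fanD c (tneg * a) a := by
  refine Or.inr (Or.inr ⟨?_, ?_⟩)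
  · ac_rfl
  · rw [sqn, absorb h]

theorem Dt_iff (hZ : CondZ G) (a b c : G) : Dt fanD a b c ↔
    (a = b ∧ le c a) ∨ (a = c ∧ le b a) ∨ (b = tneg * c ∧ le a c) := by
  constructor
  · rintro ⟨h1, h2, h3⟩
    have m : (le b a ∧ le c a) ∨ (le a b ∧ le c b) ∨ (le a c ∧ le b c) := by
      rcases le_total hZ a b with h | h <;> rcases le_total hZ a c with h' | h' <;>
        rcases le_total hZ b c with h'' | h'' <;>
        first
        | tauto
        | (have := le_trans h h''; tauto)
        | (have := le_trans h'' h; tauto)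
        | (have := le_trans h' h''; tauto)
        | (have := le_trans h'' h'; tauto)
    rcases m with ⟨x, y⟩ | ⟨x, y⟩ | ⟨x, y⟩
    · rcases key h1 x y with h | h | ⟨h, k⟩
      · exact Or.inl ⟨h, y⟩
      · exact Or.inr (Or.inl ⟨h, x⟩)
      · exact Or.inr (Or.inr ⟨h, k⟩)
    · rcases key h2 (neg_le.2 (le_neg.2 x)) (le_neg.2 y) with h | h | ⟨h, k⟩
      · have e : b = a := by rw [← nn b, h, nn]
        subst e
        exact Or.inl ⟨rfl, y⟩
      · subst h
        exact Or.inr (Or.inr ⟨(nn b).symm, le_neg.2 x⟩)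
      · have e : a = c := by rw [← nn a, h, nn]
        subst e
        exact Or.inr (Or.inl ⟨rfl, neg_le.1 k⟩)
    · rcases key h3 (le_neg.2 y) (neg_le.2 (le_neg.2 x)) with h | h | ⟨h, k⟩
      · exact Or.inr (Or.inr ⟨h.symm, x⟩)
      · have e : c = a := by rw [← nn c, h, nn]
        subst e
        exact Or.inr (Or.inl ⟨rfl, y⟩)
      · rw [nn] at h
        subst h
        exact Or.inl ⟨rfl, le_neg.1 (neg_le.1 k)⟩
  · rintro (⟨rfl, h⟩ | ⟨rfl, h⟩ | ⟨rfl, h⟩)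
    · exact ⟨D_self _ _, D_self _ _, D_opp (neg_le.2 h)⟩
    · exact ⟨D_self' _ _, D_opp' (neg_le.2 h), D_self' _ _⟩
    · refine ⟨D_opp' h, ?_, D_self _ _⟩
      rw [nn]; exact D_self' _ _

theorem D_symm (a b c : G) (h : fanD c a b) : fanD c b a := by
  rcases h with h | h | ⟨h3, h4⟩
  · exact Or.inr (Or.inl h)
  · exact Or.inl h
  · refine Or.inr (Or.inr ⟨?_, ?_⟩)
    · rw [h3, nn]
    · calc c = a * a * c := h4
        _ = a * (c * a) := by ac_rfl
        _ = a * (tneg * (c * b)) := by rw [h3]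
        _ = tneg * ((c * a) * b) := by ac_rfl
        _ = tneg * (tneg * (b * b * c)) := by rw [h3]; ac_rfl
        _ = _ := nn _

theorem rs2 (a b c d : G) (h : fanD a b c) : fanD (a * d) (b * d) (c * d) := by
  rcases h with ⟨x, h⟩ | ⟨x, h⟩ | ⟨h3, h4⟩
  · exact Or.inl ⟨x, by rw [h]; ac_rfl⟩
  · exact Or.inr (Or.inl ⟨x, by rw [h]; ac_rfl⟩)
  · refine Or.inr (Or.inr ⟨?_, ?_⟩)
    · calc a * d * (b * d) = (a * b) * (d * d) := by ac_rfl
        _ = _ := by rw [h3]; ac_rfl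
    · calc a * d = (b * b * a) * (d * d * d) := by rw [← h4, cube]
        _ = _ := by ac_rfl

theorem rs3 (hZ : CondZ G) (a b c d e : G) (h : Dt fanD a b c) (k : Dt fanD c d e) :
    ∃ x : G, Dt fanD x b d ∧ Dt fanD a x e := by
  simp only [Dt_iff hZ] at *
  rcases h with ⟨rfl, h⟩ | ⟨rfl, h⟩ | ⟨rfl, h⟩ <;>
    rcases k with ⟨rfl, k⟩ | ⟨rfl, k⟩ | ⟨rfl, k⟩
  · exact ⟨a, Or.inl ⟨rfl, h⟩, Or.inl ⟨rfl, le_trans k h⟩⟩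
  · exact ⟨a, Or.inl ⟨rfl, le_trans k h⟩, Or.inl ⟨rfl, h⟩⟩
  · rcases le_total hZ e a with m | m
    · exact ⟨a, Or.inl ⟨rfl, neg_le.2 m⟩, Or.inl ⟨rfl, m⟩⟩
    · exact ⟨tneg * e, Or.inr (Or.inl ⟨rfl, le_neg.2 m⟩), Or.inr (Or.inr ⟨rfl, m⟩)⟩
  · exact ⟨a, Or.inr (Or.inl ⟨rfl, h⟩), Or.inl ⟨rfl, k⟩⟩
  · rcases le_total hZ b d with m | m
    · exact ⟨d, Or.inr (Or.inl ⟨rfl, m⟩), Or.inr (Or.inl ⟨rfl, k⟩)⟩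
    · exact ⟨b, Or.inl ⟨rfl, m⟩, Or.inr (Or.inl ⟨rfl, h⟩)⟩
  · exact ⟨tneg * e, Or.inr (Or.inl ⟨rfl, le_neg.2 (le_trans h k)⟩), Or.inr (Or.inr ⟨rfl, k⟩)⟩
  · rcases le_total hZ e a with m | m
    · exact ⟨a, Or.inr (Or.inr ⟨rfl, h⟩), Or.inl ⟨rfl, m⟩⟩
    · exact ⟨tneg * e, Or.inr (Or.inr ⟨rfl, neg_le.2 k⟩), Or.inr (Or.inr ⟨rfl, m⟩)⟩
  · exact ⟨tneg * c, Or.inl ⟨rfl, le_neg.2 k⟩, Or.inr (Or.inr ⟨rfl, h⟩)⟩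
  · exact ⟨tneg * e, Or.inr (Or.inl ⟨rfl, neg_le.2 (le_neg.2 k)⟩),
      Or.inr (Or.inr ⟨rfl, le_trans h k⟩)⟩

theorem rs4 (a b c d e : G) (h : fanD e (c * c * a) (d * d * b)) : fanD e a b := by
  have aux : ∀ u v w : G, w = (u * u * v) * (u * u * v) * w → u * u * w = w := by
    intro u v w hw
    calc u * u * w = u * u * ((u * u * v) * (u * u * v) * w) := by rw [← hw]
      _ = (u * u * u) * u * (u * u) * (v * v) * w := by ac_rfl
      _ = (u * u * v) * (u * u * v) * w := by rw [cube]; ac_rfl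
      _ = w := hw.symm
  rcases h with ⟨x, h⟩ | ⟨x, h⟩ | h
  · exact Or.inl ⟨c * x, by rw [h]; ac_rfl⟩
  · exact Or.inr (Or.inl ⟨d * x, by rw [h]; ac_rfl⟩)
  · have h5 : e = (d * d * b) * (d * d * b) * e := by
      obtain ⟨h3, h4⟩ := h
      calc e = (c * c * a) * (c * c * a) * e := h4
        _ = (c * c * a) * (e * (c * c * a)) := by ac_rfl
        _ = (c * c * a) * (tneg * (e * (d * d * b))) := by rw [h3]
        _ = tneg * ((e * (c * c * a)) * (d * d * b)) := by ac_rfl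
        _ = tneg * (tneg * ((d * d * b) * (d * d * b) * e)) := by rw [h3]; ac_rfl
        _ = _ := nn _
    have ec := aux _ _ _ h.2
    have ed := aux _ _ _ h5
    refine Or.inr (Or.inr ⟨?_, ?_⟩)
    · calc e * a = (c * c * e) * a := by rw [ec]
        _ = e * (c * c * a) := by ac_rfl
        _ = tneg * (e * (d * d * b)) := h.1
        _ = tneg * ((d * d * e) * b) := by ac_rfl
        _ = _ := by rw [ed]
    · calc e = (c * c * a) * (c * c * a) * e := h.2
        _ = a * a * (c * c * (c * c * e)) := by ac_rfl
        _ = _ := by rw [ec, ec]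

theorem rs5 (a b c d e : G) (h1 : a * d = b * d) (h2 : a * e = b * e) (h : fanD c d e) :
    a * c = b * c := by
  rcases h with ⟨x, h⟩ | ⟨x, h⟩ | ⟨h3, h4⟩
  · rw [h, ← mul_assoc, h1, mul_assoc]
  · rw [h, ← mul_assoc, h2, mul_assoc]
  · rw [h4, mul_assoc d, ← mul_assoc a, h1, mul_assoc]

theorem sq_le (a b : G) : le (a * a * b) a := by
  unfold le
  calc a * a * b * (a * a * b) * (a * a) = (a * a * a) * (a * a * a) * (b * b) := by ac_rfl
    _ = a * a * (b * b) := by rw [cube]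
    _ = (a * a * a) * a * (b * b) := by rw [cube]
    _ = _ := by ac_rfl

theorem le_sq {a b : G} (h : le a b) : le a (a * a * b) := by
  unfold le at *
  calc a * a * (a * a * b * (a * a * b)) = (a * a * a) * (a * a * a) * (b * b) := by ac_rfl
    _ = a * a * (b * b) := by rw [cube]
    _ = _ := h

theorem rs6 (hZ : CondZ G) (a b c : G) (h : fanD c a b) :
    Dt fanD c (c * c * a) (c * c * b) := by
  have aux : ∀ s x : G, c = s * (x * x) → c = c * c * s := by
    intro s x h
    calc c = s * (x * x) := h
      _ = (s * s * s) * ((x * x * x) * x) := by rw [cube, cube]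
      _ = (s * (x * x)) * (s * (x * x)) * s := by ac_rfl
      _ = _ := by rw [← h]
  rw [Dt_iff hZ]
  rcases h with ⟨x, h⟩ | ⟨x, h⟩ | h
  · exact Or.inl ⟨aux _ _ h, sq_le _ _⟩
  · exact Or.inr (Or.inl ⟨aux _ _ h, sq_le _ _⟩)
  · right; right
    have e : c * c * a = tneg * (c * c * b) := by
      rw [mul_assoc, h.1]; ac_rfl
    refine ⟨e, ?_⟩
    rw [← le_neg, ← e]
    apply le_sq
    unfold le
    calc c * c * (a * a) = c * (a * a * c) := by ac_rfl
      _ = _ := by rw [← h.2]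

theorem rs7 (hZ : CondZ G) (a b x : G) (h : Dt fanD x a (tneg * b))
    (k : Dt fanD x b (tneg * a)) : a = b := by
  simp only [Dt_iff hZ, nn, neg_le, le_neg] at *
  have z : ∀ u v : G, u = tneg * u → le v u → u = v := by
    intro u v hu hv
    have := eq_tzero_of_eq_tneg_mul u hu
    subst this
    exact (eq_zero_of_le hv).symm
  rcases h with ⟨rfl, h⟩ | ⟨rfl, h⟩ | ⟨h, _⟩
  · rcases k with ⟨k, _⟩ | ⟨k, _⟩ | ⟨k, _⟩
    · exact k
    · exact z _ _ k h
    · exact k.symm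
  · rcases k with ⟨k, _⟩ | ⟨k, _⟩ | ⟨k, _⟩
    · exact (z _ _ k.symm (le_neg.1 h)).symm
    · rw [← nn a, ← k, nn]
    · exact k.symm
  · exact h

theorem rs8 (a b c : G) (h : fanD a b c) : fanD (a * a) (b * b) (c * c) := by
  rcases h with ⟨x, h⟩ | ⟨x, h⟩ | ⟨h3, h4⟩
  · exact Or.inl ⟨x * x, by rw [h]; ac_rfl⟩
  · exact Or.inr (Or.inl ⟨x * x, by rw [h]; ac_rfl⟩)
  · refine Or.inl ⟨a, ?_⟩
    calc a * a = (b * b * a) * a := by rw [← h4]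
      _ = _ := by ac_rfl

end Fan

/-- A ternary semigroup satisfying condition [Z], equipped with the fan representation
relation, is a real semigroup: all axioms [RS0]-[RS8] hold. -/
theorem stmt_9 {G : Type u} [TernarySemigroup G] (hZ : CondZ G) :
    IsRealSemigroup (fanD (G := G)) := by
  exact ⟨fun a b c => ⟨Fan.D_symm a b c, Fan.D_symm b a c⟩, Fan.D_self, Fan.rs2, Fan.rs3 hZ,
    Fan.rs4, Fan.rs5, Fan.rs6 hZ, fun a b ⟨x, h, k⟩ => Fan.rs7 hZ a b x h k, Fan.rs8⟩
end

section
/- Let G be a ternary semigroup satisfying condition [Z], equipped with the fan representation relation D (so that (G,D) is a RS-fan). Let H be any real semigroup (a TS with a ternary relation D_H satisfying [RS0]–[RS8]), and let f : G → H be a homomorphism of ternary semigroups (f preserves multiplication and sends 1, 0, -1 to 1, 0, -1). Then f preserves representation: for all a, b, c ∈ G, c ∈ D(a,b) implies f(c) ∈ D_H(f(a), f(b)). -/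
universe u

open TernarySemigroup

/-- Any TS-homomorphism from a RS-fan `G` into a real semigroup `H` preserves the (fan)
representation relation, hence is a RS-homomorphism. -/
theorem stmt_10 {G : Type u} {H : Type u} [TernarySemigroup G] [TernarySemigroup H]
    (hZ : CondZ G) (DH : H → H → H → Prop) (hRS : IsRealSemigroup DH)
    (f : G → H) (hmul : ∀ x y : G, f (x * y) = f x * f y)
    (hone : f 1 = 1) (hzero : f (tzero : G) = tzero) (hneg : f (tneg : G) = tneg)
    (a b c : G) (hc : fanD c a b) :
    DH (f c) (f a) (f b) := by
  obtain ⟨h0, h1, h2, -, h4, -, h6, -, -⟩ := hRS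
  have key : ∀ A B x : H, DH (A * (x * x)) A B := by
    intro A B x
    apply h4 A B x 1
    have e : x * x * A = A * (x * x) := mul_comm _ _
    rw [e]
    exact h1 _ _
  have univ : ∀ y : H, DH y 1 tneg := by
    intro y
    have h := (h6 1 (tneg * y) 1 (h1 _ _)).2.2
    simpa [← mul_assoc, tneg_mul_tneg] using h
  rcases hc with ⟨x, rfl⟩ | ⟨x, rfl⟩ | ⟨e1, e2⟩
  · rw [hmul, hmul]; exact key _ _ _
  · rw [hmul, hmul, h0]; exact key _ _ _
  · have E1 : f c * f a = tneg * (f c * f b) := by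
      rw [← hmul, ← hmul, ← hneg, ← hmul, ← e1]
    have E2 : f c = f a * f a * f c := by
      rw [← hmul, ← hmul, ← e2]
    generalize f a = A at *
    generalize f b = B at *
    generalize f c = C at *
    apply h4 A B C C
    have h := h2 _ _ _ (C * C * A) (univ (C * A))
    have t1 : C * A * (C * C * A) = C := by
      calc C * A * (C * C * A) = A * A * (C * C * C) := by ac_rfl
        _ = C := by rw [cube, ← E2]
    have t2 : tneg * (C * C * A) = C * C * B := by
      calc tneg * (C * C * A) = tneg * C * (C * A) := by ac_rfl
        _ = tneg * C * (tneg * (C * B)) := by rw [E1]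
        _ = (tneg * tneg) * (C * C * B) := by ac_rfl
        _ = C * C * B := by rw [tneg_mul_tneg, one_mul]
    rwa [t1, t2, one_mul] at h
end

section
/- Let G be a RS-fan, with D its fan representation relation and D^t the derived transversal relation. Then the invertible elements of G form a fan in the sense of reduced special groups: for all a, b ∈ G with a² = b² = 1, if b ≠ -a then D^t(a,b) = {a, b}, while if b = -a then D^t(a,b) = G; moreover, for invertible c (c² = 1), c ∈ D(a,b) if and only if c ∈ D^t(a,b). -/
universe u

open TernarySemigroup

theorem ts_unit_sq {G : Type u} [TernarySemigroup G] {c a x : G} (hc : c * c = 1)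
    (ha : a * a = 1) (h : c = a * (x * x)) : c = a := by
  have h1 : x * x = 1 := by
    have : c * c = (a * a) * (x * x * x * x) := by rw [h]; ac_rfl
    rw [hc, ha, cube, one_mul] at this
    exact this.symm
  rw [h, h1, mul_one]

theorem ts_cancel {G : Type u} [TernarySemigroup G] {c x y : G} (hc : c * c = 1)
    (h : c * x = c * y) : x = y := by
  have h2 : c * c * x = c * c * y := by rw [mul_assoc, h, mul_assoc]
  simpa [hc] using h2

theorem ts_neg_sq {G : Type u} [TernarySemigroup G] {a : G} (ha : a * a = 1) :
    (tneg * a) * (tneg * a) = 1 := by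
  rw [mul_mul_mul_comm, tneg_mul_tneg, ha, one_mul]

theorem ts_neg_neg {G : Type u} [TernarySemigroup G] (a : G) :
    tneg * (tneg * a) = a := by
  rw [← mul_assoc, tneg_mul_tneg, one_mul]

theorem ts_left {G : Type u} [TernarySemigroup G] (a b : G) : fanD a a b :=
  Or.inl ⟨1, by simp⟩

theorem ts_right {G : Type u} [TernarySemigroup G] (a b : G) : fanD b a b :=
  Or.inr (Or.inl ⟨1, by simp⟩)

theorem ts_hyp {G : Type u} [TernarySemigroup G] (c : G) {a : G} (ha : a * a = 1) :
    fanD c a (tneg * a) :=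
  Or.inr (Or.inr ⟨by rw [mul_left_comm c, ts_neg_neg], by rw [ha, one_mul]⟩)

theorem ts_hyp' {G : Type u} [TernarySemigroup G] (c : G) {a : G} (ha : a * a = 1) :
    fanD c (tneg * a) a := by
  have := ts_hyp c (ts_neg_sq ha)
  rwa [ts_neg_neg] at this

theorem ts_dt_left {G : Type u} [TernarySemigroup G] {a : G} (b : G) (ha : a * a = 1) :
    Dt fanD a a b := ⟨ts_left _ _, ts_left _ _, ts_hyp _ ha⟩

theorem ts_dt_right {G : Type u} [TernarySemigroup G] (a : G) {b : G} (hb : b * b = 1) :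
    Dt fanD b a b := ⟨ts_right _ _, ts_hyp' _ hb, ts_right _ _⟩

theorem ts_dt_hyp {G : Type u} [TernarySemigroup G] (c : G) {a : G} (ha : a * a = 1) :
    Dt fanD c a (tneg * a) :=
  ⟨ts_hyp _ ha, ts_right _ _, by rw [ts_neg_neg]; exact ts_left _ _⟩

/-- The invertible elements of a RS-fan form a fan in the sense of reduced special groups:
for units `a, b`, `D^t(a,b) = {a,b}` if `b ≠ -a`, `D^t(a,b) = G` if `b = -a`, and for a unit
`c`, representation and transversal representation agree. -/
theorem stmt_11 {G : Type u} [TernarySemigroup G] (hZ : CondZ G)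
    (a b : G) (ha : a * a = 1) (hb : b * b = 1) :
    (b ≠ tneg * a → {c : G | Dt fanD c a b} = {a, b}) ∧
    (b = tneg * a → {c : G | Dt fanD c a b} = Set.univ) ∧
    (∀ c : G, c * c = 1 → (fanD c a b ↔ Dt fanD c a b)) := by
  refine ⟨fun hne => ?_, fun h => ?_, fun c hc => ⟨fun h => ?_, fun h => h.1⟩⟩
  · ext c
    simp only [Set.mem_setOf_eq, Set.mem_insert_iff, Set.mem_singleton_iff]
    constructor
    · rintro ⟨-, h, -⟩
      rcases h with ⟨x, h⟩ | ⟨x, h⟩ | ⟨h, -⟩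
      · left
        have h1 : a = c * (x * x) := ts_cancel tneg_mul_tneg (by rw [h, mul_assoc])
        have h2 : a * (x * x) = a * 1 := by
          have h3 : c * (x * x) * (x * x) = c * (x * x * x * x) := by ac_rfl
          rw [cube] at h3
          rw [mul_one, h1, h3]
        rw [h1, ts_cancel ha h2, mul_one]
      · exact absurd (ts_unit_sq (ts_neg_sq ha) hb h).symm hne
      · right
        apply ts_cancel ha
        rw [mul_mul_mul_comm, tneg_mul_tneg, one_mul, mul_assoc, ts_neg_neg] at h
        exact h
    · rintro (rfl | rfl)
      · exact ts_dt_left _ ha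
      · exact ts_dt_right _ hb
  · subst h
    ext c
    simpa using ts_dt_hyp c ha
  · by_cases hne : b = tneg * a
    · subst hne
      exact ts_dt_hyp c ha
    · rcases h with ⟨x, h⟩ | ⟨x, h⟩ | ⟨h, -⟩
      · rw [ts_unit_sq hc ha h]
        exact ts_dt_left _ ha
      · rw [ts_unit_sq hc hb h]
        exact ts_dt_right _ hb
      · rw [mul_left_comm] at h
        have := ts_cancel hc h
        exact absurd (by rw [this, ts_neg_neg]) hne
end

section
/- Let G be a ternary semigroup satisfying condition [Z] and let D be the fan representation relation on G. Then: (1) every ideal I of G is saturated for D (i.e., a, b ∈ I and c ∈ D(a,b) imply c ∈ I), and every proper ideal of G is prime; (2) a multiplicatively closed subset S of G containing 1 is saturated for D if and only if Id(G) ⊆ S and S ∩ -S is an ideal of G. -/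
universe u

open TernarySemigroup

/-- In a ternary semigroup with condition [Z] equipped with the fan representation relation:
(1) every ideal is saturated and every proper ideal is prime; (2) a multiplicatively closed
subset `S` containing `1` is saturated iff it contains all squares and `S ∩ -S` is an ideal. -/
theorem stmt_12 {G : Type u} [TernarySemigroup G] (hZ : CondZ G) :
    (∀ I : Set G, TSIdeal I →
      (∀ a ∈ I, ∀ b ∈ I, ∀ c : G, fanD c a b → c ∈ I) ∧
      (I ≠ Set.univ → ∀ a b : G, a * b ∈ I → a ∈ I ∨ b ∈ I)) ∧
    (∀ S : Set G, (1 : G) ∈ S → (∀ x ∈ S, ∀ y ∈ S, x * y ∈ S) →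
      ((∀ a ∈ S, ∀ b ∈ S, ∀ c : G, fanD c a b → c ∈ S) ↔
        ((∀ x : G, x * x ∈ S) ∧ TSIdeal (S ∩ {x : G | ∃ s ∈ S, x = tneg * s})))) := by
  refine ⟨fun I hI => ⟨?_, ?_⟩, fun S h1 hS => ⟨fun hsat => ?_, ?_⟩⟩
  · rintro a ha b hb c (⟨x, rfl⟩ | ⟨x, rfl⟩ | ⟨-, h⟩)
    · exact hI.2 a ha _
    · exact hI.2 b hb _
    · rw [h, mul_assoc]
      exact hI.2 a ha _
  · intro _ a b hab
    have h : a * a * (b * b) ∈ I := by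
      have := hI.2 _ hab (a * b)
      rwa [mul_mul_mul_comm] at this
    rcases hZ a b with e | e
    · left
      rw [e] at h
      have := hI.2 _ h a
      rwa [cube] at this
    · right
      rw [e] at h
      have := hI.2 _ h b
      rwa [cube] at this
  · have hsq : ∀ x : G, x * x ∈ S := fun x =>
      hsat 1 h1 1 h1 _ (Or.inl ⟨x, (one_mul _).symm⟩)
    have h0 : (tzero : G) ∈ S := by
      have := hsq tzero
      rwa [mul_tzero] at this
    refine ⟨hsq, ⟨tzero, h0, tzero, h0, (mul_tzero _).symm⟩, ?_⟩
    rintro x ⟨hx, s, hs, hxs⟩ y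
    have key : ∀ z : G, x * z ∈ S := by
      intro z
      refine hsat x hx s hs _ (Or.inr (Or.inr ⟨?_, ?_⟩))
      · calc x * z * x = x * z * (tneg * s) := by rw [← hxs]
          _ = tneg * (x * z * s) := mul_left_comm _ _ _
      · rw [← mul_assoc, cube]
    refine ⟨key y, x * (tneg * y), key _, ?_⟩
    rw [mul_left_comm x, ← mul_assoc, tneg_mul_tneg, one_mul]
  · rintro ⟨hsq, -, hid⟩ a ha b hb c (⟨x, rfl⟩ | ⟨x, rfl⟩ | ⟨h, h'⟩)
    · exact hS _ ha _ (hsq x)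
    · exact hS _ hb _ (hsq x)
    · have hu : c * c * a ∈ S ∩ {x : G | ∃ s ∈ S, x = tneg * s} := by
        refine ⟨hS _ (hsq c) _ ha, c * c * b, hS _ (hsq c) _ hb, ?_⟩
        rw [mul_assoc, h, mul_left_comm, mul_assoc]
      have hc := (hid _ hu (a * c)).1
      have e : c * c * a * (a * c) = c := by
        calc c * c * a * (a * c) = c * c * (a * a * c) := by simp only [mul_assoc]
          _ = c := by rw [← h', cube]
      rwa [e] at hc
end

section
/- Let G be a ternary semigroup and let X ⊆ Hom_TS(G,3) be nonempty and closed under the pointwise product of any three of its members. Endow 3 = {-1,0,1} with the discrete topology, 3^G with the product topology, and Hom_TS(G,3) with the subspace topology (the constructible topology). Then X separates points of G (i.e., (X,G) is a q-fan) if and only if X is dense in Hom_TS(G,3). In particular, if X is closed in Hom_TS(G,3), then X = Hom_TS(G,3). -/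
universe u

open TernarySemigroup

/-- The discrete topology on the ternary semigroup `3 = SignType`; `G → SignType` then
carries the product topology and the character space the subspace (constructible) topology. -/
instance : TopologicalSpace SignType := ⊥

instance : DiscreteTopology SignType := ⟨rfl⟩

lemma sg_cases (s : SignType) : s = 0 ∨ s = 1 ∨ s = -1 := by
  revert s; decide

/-- Existence of characters with a prescribed support and value. -/
lemma exists_char {G : Type u} [TernarySemigroup G] (e t : G) (he : e * e = e)
    (he0 : e ≠ tzero) (ht : t * t * e = e) (hte : t * e ≠ e) :
    ∃ h : G → SignType, IsTSChar h ∧ h t = -1 ∧ (∀ x, x * x * e ≠ e → h x = 0) ∧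
      ∀ x, x * x * e = e → h x ≠ 0 := by
  classical
  have hnn := tneg_mul_tneg (G := G)
  have hne : (tneg : G) * e ≠ e := fun h => he0 (eq_tzero_of_eq_tneg_mul e h.symm)
  let good : Set (Submonoid G) := {P | (∀ p ∈ P, p * p * e = e) ∧ ∀ p ∈ P, p * e ≠ tneg * e}
  let P0 : Submonoid G :=
    { carrier := {x | x * e = e ∨ x * e = tneg * t * e}
      one_mem' := by simp
      mul_mem' := by
        intro a b ha hb
        simp only [Set.mem_setOf_eq] at *
        rcases ha with ha | ha <;> rcases hb with hb | hb <;> grind }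
  have hP0 : P0 ∈ good := by
    constructor
    · intro p hp
      have hp : p * e = e ∨ p * e = tneg * t * e := hp
      rcases hp with hp | hp <;> grind
    · intro p hp
      have hp : p * e = e ∨ p * e = tneg * t * e := hp
      rcases hp with hp | hp
      · grind
      · intro h
        apply hte
        have : tneg * (tneg * t * e) = tneg * (tneg * e) := by rw [← hp, h]
        grind
  obtain ⟨P, hP0P, hPmax⟩ := zorn_le_nonempty₀ good (by
    intro c hc hchain y hy
    refine ⟨sSup c, ?_, fun z hz => le_sSup hz⟩
    have hmem : ∀ p, p ∈ sSup c ↔ ∃ s ∈ c, p ∈ s := fun p =>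
      Submonoid.mem_sSup_of_directedOn ⟨y, hy⟩ hchain.directedOn
    constructor
    · intro p hp
      obtain ⟨s, hs, hps⟩ := (hmem p).1 hp
      exact (hc hs).1 p hps
    · intro p hp
      obtain ⟨s, hs, hps⟩ := (hmem p).1 hp
      exact (hc hs).2 p hps) P0 hP0
  obtain ⟨⟨hPT, hPn⟩, hmax⟩ := hPmax
  have hext : ∀ x, x * x * e = e → x ∉ P → ∃ p ∈ P, x * p * e = tneg * e := by
    intro x hx hxP
    by_contra! hcon
    let Q : Submonoid G :=
      { carrier := {y | y * e = e ∨ ∃ p ∈ P, y * e = p * e ∨ y * e = x * p * e}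
        one_mem' := by simp
        mul_mem' := by
          rintro a b (ha | ⟨p, hp, ha | ha⟩) (hb | ⟨q, hq, hb | hb⟩)
          · left; grind
          · right; exact ⟨q, hq, by grind⟩
          · right; exact ⟨q, hq, by grind⟩
          · right; exact ⟨p, hp, by grind⟩
          · right; exact ⟨p * q, P.mul_mem hp hq, by grind⟩
          · right; exact ⟨p * q, P.mul_mem hp hq, by grind⟩
          · right; exact ⟨p, hp, by grind⟩
          · right; exact ⟨p * q, P.mul_mem hp hq, by grind⟩
          · right; exact ⟨p * q, P.mul_mem hp hq, by grind⟩ }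
    have hQ : Q ∈ good := by
      constructor
      · rintro y (hy | ⟨p, hp, hy | hy⟩)
        · grind
        · have := hPT p hp
          grind
        · have := hPT p hp
          grind
      · rintro y (hy | ⟨p, hp, hy | hy⟩)
        · grind
        · have := hPn p hp
          grind
        · have := hcon p hp
          grind
    have hle : P ≤ Q := fun p hp => Or.inr ⟨p, hp, Or.inl rfl⟩
    exact hxP (hmax hQ hle (Or.inr ⟨1, P.one_mem, Or.inr (by simp)⟩))
  have hor : ∀ x, x * x * e = e → x ∉ P → tneg * x ∈ P := by
    intro x hx hxP
    by_contra hnx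
    obtain ⟨p, hp, h1⟩ := hext x hx hxP
    obtain ⟨q, hq, h2⟩ := hext (tneg * x) (by grind) hnx
    apply hPn (p * q) (P.mul_mem hp hq)
    have e1 : (x * p * e) * (tneg * x * q * e) = (tneg * e) * (tneg * e) := by rw [h1, h2]
    have e2 : tneg * (p * q * e) = e := by grind
    grind
  have hand : ∀ x, x ∈ P → tneg * x ∉ P := by
    intro x hx hnx
    apply hPn _ (P.mul_mem hx hnx)
    have := hPT x hx
    grind
  have hTmul : ∀ x y : G, (x * y) * (x * y) * e = e ↔ x * x * e = e ∧ y * y * e = e := by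
    intro x y
    have cx := cube x
    have cy := cube y
    constructor
    · intro h
      constructor
      · have : x * x * (x * y * (x * y) * e) = x * x * e := by rw [h]
        grind
      · have : y * y * (x * y * (x * y) * e) = y * y * e := by rw [h]
        grind
    · grind
  refine ⟨fun x => if x * x * e = e then (if x ∈ P then 1 else -1) else 0,
    ⟨?_, ?_, ?_, ?_⟩, ?_, ?_, ?_⟩
  · intro x y
    have hxy := hTmul x y
    by_cases hx : x * x * e = e
    swap
    · simp [hx, hxy]
    by_cases hy : y * y * e = e
    swap
    · simp [hy, hxy]
    have hxy' := hxy.2 ⟨hx, hy⟩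
    simp only [hx, hy, hxy', if_true]
    by_cases hxP : x ∈ P <;> by_cases hyP : y ∈ P
    · simp [hxP, hyP, P.mul_mem hxP hyP]
    · have : x * y ∉ P := by
        intro h
        have h1 := P.mul_mem hxP (P.mul_mem h (hor y hy hyP))
        apply hPn _ h1
        grind
      simp [hxP, hyP, this]
    · have : x * y ∉ P := by
        intro h
        have h1 := P.mul_mem hyP (P.mul_mem h (hor x hx hxP))
        apply hPn _ h1
        grind
      simp [hxP, hyP, this]
    · have h1 := P.mul_mem (hor x hx hxP) (hor y hy hyP)
      have : x * y ∈ P := by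
        have h2 : tneg * x * (tneg * y) = x * y := by grind
        rwa [h2] at h1
      simp [hxP, hyP, this]
  · simp [P.one_mem]
  · have : (tzero : G) * tzero * e ≠ e := by
      rw [mul_comm, mul_comm (tzero : G) tzero, mul_tzero, mul_tzero]
      exact he0.symm
    simp [this]
  · have h1 : (tneg : G) ∉ P := fun h => hPn _ h rfl
    simp [h1, hnn]
  · have h1 : tneg * t ∈ P := hP0P (Or.inr rfl)
    have h2 : t ∉ P := fun h => hand t h h1
    simp [h2, ht]
  · intro x hx
    simp [hx]
  · intro x hx
    by_cases hxP : x ∈ P <;> simp [hx, hxP]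

lemma char_aux {G : Type u} [TernarySemigroup G] {a b : G} (hab : a * a * (b * b) ≠ a * a) :
    ∃ h : G → SignType, IsTSChar h ∧ h a ≠ h b := by
  have ca := cube a
  have hnn := tneg_mul_tneg (G := G)
  have h0 : a * a ≠ tzero := by
    intro h
    rw [h, mul_comm, mul_tzero] at hab
    exact hab rfl
  obtain ⟨h, hc, h1, h2, h3⟩ := exists_char (a * a) tneg (by grind) h0 (by grind)
    (fun h => h0 (eq_tzero_of_eq_tneg_mul _ h.symm))
  refine ⟨h, hc, ?_⟩
  have hb : h b = 0 := h2 b (by rwa [mul_comm])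
  rw [hb]
  exact h3 a (by grind)

lemma chars_separate {G : Type u} [TernarySemigroup G] {a b : G} (hab : a ≠ b) :
    ∃ h : G → SignType, IsTSChar h ∧ h a ≠ h b := by
  have ca := cube a
  have cb := cube b
  by_cases h1 : a * a * (b * b) = a * a
  swap
  · exact char_aux h1
  by_cases h2 : b * b * (a * a) = b * b
  swap
  · obtain ⟨h, hc, hh⟩ := char_aux h2
    exact ⟨h, hc, hh.symm⟩
  have h3 : a * a = b * b := by rw [← h1, ← h2, mul_comm]; grind
  have h0 : a * a ≠ tzero := by
    intro h
    have ha : a = tzero := by rw [← ca, h, mul_comm, mul_tzero]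
    have hb : b = tzero := by rw [← cb, ← h3, h, mul_comm, mul_tzero]
    exact hab (ha.trans hb.symm)
  obtain ⟨h, hc, h4, -, -⟩ := exists_char (a * a) (a * b) (by grind) h0 (by grind) (by grind)
  refine ⟨h, hc, fun h5 => ?_⟩
  rw [hc.1, h5] at h4
  revert h4
  generalize h b = s
  revert s; decide

/-- Affine duality step, by induction on the finite set. -/
lemma affine_step {G : Type u} [TernarySemigroup G] (g : G → SignType) (hg : IsTSChar g)
    (T : Set G) (hT : ∀ x ∈ T, ∀ y ∈ T, x * y ∈ T) (hTn : (tneg : G) ∈ T)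
    (hgT : ∀ t ∈ T, g t ≠ 0)
    (F : Finset G) (hF : ∀ f ∈ F, f ∈ T) :
    ∀ Y : Set (G → SignType), (∀ y ∈ Y, IsTSChar y) → (∀ y ∈ Y, ∀ t ∈ T, y t ≠ 0) →
      (∀ y₁ ∈ Y, ∀ y₂ ∈ Y, ∀ y₃ ∈ Y, y₁ * y₂ * y₃ ∈ Y) →
      (∀ t ∈ T, g t = -1 → ∃ y ∈ Y, y t = -1) → ∃ y ∈ Y, ∀ f ∈ F, y f = g f := by
  classical
  induction F using Finset.induction_on with
  | empty =>
    intro Y _ _ _ hC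
    obtain ⟨y, hy, -⟩ := hC tneg hTn hg.2.2.2
    exact ⟨y, hy, by simp⟩
  | insert f F _ ih =>
    intro Y hY hY0 hY3 hC
    have hfT : f ∈ T := hF f (by simp)
    -- normalise the sign of the new element
    obtain ⟨k, hkT, hgk, hk⟩ : ∃ k ∈ T, g k = 1 ∧ ∀ y ∈ Y, y k = 1 → y f = g f := by
      rcases sg_cases (g f) with h | h | h
      · exact absurd h (hgT f hfT)
      · exact ⟨f, hfT, h, fun y _ hy => by rw [hy, h]⟩
      · refine ⟨tneg * f, hT _ hTn _ hfT, by rw [hg.1, hg.2.2.2, h]; decide, ?_⟩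
        intro y hy h1
        rw [(hY y hy).1, (hY y hy).2.2.2] at h1
        rw [h]
        revert h1
        generalize y f = s
        revert s; decide
    obtain ⟨y, ⟨hyY, hyk⟩, hyF⟩ := ih (fun x hx => hF x (by simp [hx])) {y | y ∈ Y ∧ y k = 1}
      (fun y hy => hY y hy.1) (fun y hy => hY0 y hy.1)
      (fun y₁ h₁ y₂ h₂ y₃ h₃ => ⟨hY3 _ h₁.1 _ h₂.1 _ h₃.1, by
        simp [Pi.mul_apply, h₁.2, h₂.2, h₃.2]⟩) (by
      intro t htT htg
      obtain ⟨y₁, m₁, h₁⟩ := hC (tneg * k) (hT _ hTn _ hkT)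
        (by rw [hg.1, hg.2.2.2, hgk]; decide)
      obtain ⟨y₂, m₂, h₂⟩ := hC t htT htg
      obtain ⟨y₃, m₃, h₃⟩ := hC (t * k) (hT _ htT _ hkT) (by rw [hg.1, htg, hgk]; decide)
      rw [(hY _ m₁).1, (hY _ m₁).2.2.2] at h₁
      rw [(hY _ m₃).1] at h₃
      by_contra! hcon
      have c₁ := hcon y₁
      have c₂ := hcon y₂
      have c₃ := hcon y₃
      have c := hcon (y₁ * y₂ * y₃)
      have n₁ := hY0 _ m₁ t htT
      have n₂ := hY0 _ m₂ k hkT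
      simp only [Set.mem_setOf_eq, m₁, m₂, m₃, true_and, hY3 _ m₁ _ m₂ _ m₃,
        Pi.mul_apply] at c₁ c₂ c₃ c
      rw [h₂] at c₂ c
      revert c₁ c₂ c₃ c h₁ h₃ n₁ n₂
      generalize y₁ k = a₁
      generalize y₁ t = b₁
      generalize y₂ k = a₂
      generalize y₃ k = a₃
      generalize y₃ t = b₃
      clear * -
      revert a₁ b₁ a₂ a₃ b₃
      decide)
    refine ⟨y, hyY, fun x hx => ?_⟩
    rcases Finset.mem_insert.1 hx with rfl | hx
    · exact hk y hyY hyk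
    · exact hyF x hx

lemma exists_agree {G : Type u} [TernarySemigroup G] (X : Set (G → SignType))
    (hX : ∀ h ∈ X, IsTSChar h)
    (h3 : ∀ y₁ ∈ X, ∀ y₂ ∈ X, ∀ y₃ ∈ X, y₁ * y₂ * y₃ ∈ X)
    (hsep : ∀ a b : G, a ≠ b → ∃ h ∈ X, h a ≠ h b)
    (g : G → SignType) (hg : IsTSChar g) (I : Finset G) :
    ∃ h ∈ X, ∀ i ∈ I, h i = g i := by
  classical
  -- an idempotent below the squares of all elements of the support
  have key : ∀ F : Finset G, (∀ f ∈ F, g f ≠ 0) →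
      ∃ e : G, e * e = e ∧ g e = 1 ∧ ∀ f ∈ F, f * f * e = e := by
    intro F
    induction F using Finset.induction_on with
    | empty => exact fun _ => ⟨1, by simp, hg.2.1, by simp⟩
    | insert f F _ ih =>
      intro hF
      obtain ⟨e, he, hge, heF⟩ := ih (fun x hx => hF x (by simp [hx]))
      have cf := cube f
      refine ⟨f * f * e, by grind, ?_, ?_⟩
      · rw [hg.1, hg.1, hge]
        have := hF f (by simp)
        revert this
        generalize g f = s
        revert s; decide
      · intro x hx
        rcases Finset.mem_insert.1 hx with rfl | hx
        · grind
        · have := heF x hx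
          grind
  obtain ⟨e, he, hge, heF⟩ := key (I.filter (fun i => g i ≠ 0)) (by simp)
  have he1 : ∀ h ∈ X, h e ≠ 0 → h e = 1 := by
    intro h hh h0
    have h1 : h e * h e = h e := by rw [← (hX h hh).1, he]
    revert h0 h1
    generalize h e = s
    revert s; decide
  have hz : ∀ Z : Finset G, (∀ z ∈ Z, g z = 0) → ∃ y ∈ X, y e = 1 ∧ ∀ z ∈ Z, y z = 0 := by
    intro Z
    induction Z using Finset.induction_on with
    | empty =>
      intro _
      obtain ⟨h, hh, hne⟩ := hsep e tzero (by
        rintro rfl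
        rw [hg.2.2.1] at hge
        exact absurd hge (by decide))
      rw [(hX h hh).2.2.1] at hne
      exact ⟨h, hh, he1 h hh hne, by simp⟩
    | insert z Z _ ih =>
      intro hZ
      obtain ⟨y, hy, hye, hyZ⟩ := ih (fun x hx => hZ x (by simp [hx]))
      obtain ⟨h, hh, hne⟩ := hsep (e * (z * z)) e (by
        intro h
        have h1 := congrArg g h
        rw [hg.1, hg.1, hZ z (by simp), hge] at h1
        exact absurd h1 (by decide))
      rw [(hX h hh).1, (hX h hh).1] at hne
      have hhe : h e = 1 := he1 h hh (by intro h0; simp [h0] at hne)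
      have hhz : h z = 0 := by
        rw [hhe] at hne
        revert hne
        generalize h z = s
        revert s; decide
      refine ⟨y * h * h, h3 _ hy _ hh _ hh, by simp [hye, hhe], ?_⟩
      intro x hx
      rcases Finset.mem_insert.1 hx with rfl | hx
      · simp [hhz]
      · simp [hyZ x hx]
  obtain ⟨y0, hy0, hy0e, hy0Z⟩ := hz (I.filter (fun i => g i = 0)) (by simp)
  have hunit : ∀ h : G → SignType, IsTSChar h → h e = 1 → ∀ t, t * t * e = e → h t * h t = 1 := by
    intro h hh hhe t ht
    have h1 := congrArg h ht
    rw [hh.1, hh.1, hhe] at h1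
    simpa using h1
  have hunit0 : ∀ h : G → SignType, IsTSChar h → h e = 1 → ∀ t, t * t * e = e → h t ≠ 0 := by
    intro h hh hhe t ht h0
    have := hunit h hh hhe t ht
    rw [h0] at this
    exact absurd this (by decide)
  obtain ⟨y, ⟨hyX, hye, hyZ⟩, hyF⟩ := affine_step g hg {t | t * t * e = e}
    (by
      intro x hx y hy
      simp only [Set.mem_setOf_eq] at *
      grind)
    (by simp [tneg_mul_tneg]) (fun t ht => hunit0 g hg hge t ht)
    (I.filter (fun i => g i ≠ 0)) heF
    {y | y ∈ X ∧ y e = 1 ∧ ∀ z ∈ I.filter (fun i => g i = 0), y z = 0}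
    (fun y hy => hX y hy.1) (fun y hy t ht => hunit0 y (hX y hy.1) hy.2.1 t ht)
    (fun y₁ m₁ y₂ m₂ y₃ m₃ => ⟨h3 _ m₁.1 _ m₂.1 _ m₃.1, by
      simp [m₁.2.1, m₂.2.1, m₃.2.1], fun z hz => by
      simp [m₁.2.2 z hz]⟩)
    (by
      intro t ht htg
      obtain ⟨h, hh, hne⟩ := hsep (t * e) e (by
        intro h
        have h1 := congrArg g h
        rw [hg.1, htg, hge] at h1
        exact absurd h1 (by decide))
      rw [(hX h hh).1] at hne
      have hhe : h e = 1 := he1 h hh (by intro h0; simp [h0] at hne)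
      have hht := hunit0 h (hX h hh) hhe t ht
      have hht' : h t = -1 := by
        rcases sg_cases (h t) with h | h | h
        · exact absurd h hht
        · simp [h] at hne
        · exact h
      have hy0t := hunit y0 (hX y0 hy0) hy0e t ht
      refine ⟨h * y0 * y0, ⟨h3 _ hh _ hy0 _ hy0, by simp [hhe, hy0e], fun z hz => ?_⟩, ?_⟩
      · simp [hy0Z z hz]
      · simp only [Pi.mul_apply]
        rw [mul_assoc, hy0t, hht', mul_one])
  refine ⟨y, hyX, fun i hi => ?_⟩
  by_cases h0 : g i = 0
  · rw [h0]
    exact hyZ i (by simp [hi, h0])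
  · exact hyF i (by simp [hi, h0])

/-- A nonempty set of TS-characters closed under products of any three of its members is a
q-fan (i.e., separates points) iff it is dense in the character space with the constructible
topology; in particular, if in addition it is closed, it is the whole character space. -/
theorem stmt_13 (G : Type u) [TernarySemigroup G]
    (X : Set {h : G → SignType // IsTSChar h}) (hne : X.Nonempty)
    (h3 : ∀ h₁ ∈ X, ∀ h₂ ∈ X, ∀ h₃ ∈ X,
      ∃ h ∈ X, (h : G → SignType) = (h₁ : G → SignType) * (h₂ : G → SignType) * (h₃ : G → SignType)) :
    ((∀ a b : G, a ≠ b → ∃ h ∈ X, (h : G → SignType) a ≠ (h : G → SignType) b) ↔ Dense X) ∧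
    ((∀ a b : G, a ≠ b → ∃ h ∈ X, (h : G → SignType) a ≠ (h : G → SignType) b) →
      IsClosed X → X = Set.univ) := by
  have key : (∀ a b : G, a ≠ b → ∃ h ∈ X, (h : G → SignType) a ≠ (h : G → SignType) b) →
      Dense X := by
    intro hsep
    rw [dense_iff_inter_open]
    rintro U hU ⟨g, hgU⟩
    obtain ⟨V, hV, rfl⟩ := isOpen_induced_iff.1 hU
    obtain ⟨I, u, hu, hIu⟩ := isOpen_pi_iff.1 hV g.1 hgU
    obtain ⟨_, ⟨h, hh, rfl⟩, hag⟩ := exists_agree (Set.image Subtype.val X)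
      (by rintro _ ⟨h, -, rfl⟩; exact h.2)
      (by
        rintro _ ⟨h₁, m₁, rfl⟩ _ ⟨h₂, m₂, rfl⟩ _ ⟨h₃, m₃, rfl⟩
        obtain ⟨h, hh, he⟩ := h3 h₁ m₁ h₂ m₂ h₃ m₃
        exact ⟨h, hh, he⟩)
      (by
        intro a b hab
        obtain ⟨h, hh, hne⟩ := hsep a b hab
        exact ⟨_, ⟨h, hh, rfl⟩, hne⟩) g.1 g.2 I
    refine ⟨h, hIu ?_, hh⟩
    intro i hi
    rw [hag i hi]
    exact (hu i hi).2
  refine ⟨⟨key, ?_⟩, ?_⟩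
  · intro hd a b hab
    obtain ⟨g, hg, hgab⟩ := chars_separate hab
    have hopen : IsOpen {h : {h : G → SignType // IsTSChar h} | h.1 a ≠ h.1 b} := by
      have hc : Continuous (fun h : {h : G → SignType // IsTSChar h} => (h.1 a, h.1 b)) :=
        ((continuous_apply a).comp continuous_subtype_val).prodMk
          ((continuous_apply b).comp continuous_subtype_val)
      exact (isOpen_discrete {p : SignType × SignType | p.1 ≠ p.2}).preimage hc
    obtain ⟨h, h1, h2⟩ := hd.inter_open_nonempty _ hopen ⟨⟨g, hg⟩, hgab⟩
    exact ⟨h, h2, h1⟩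
  · intro hsep hcl
    rw [← hcl.closure_eq]
    exact (key hsep).closure_eq
end

section
/- Let F be a RS-fan with representation partial order ≤. Then for a, b ∈ F: (1) if a ≤ b and a ≠ b, then a ∈ Id(F) or -b ∈ Id(F); in particular, (2) if neither a, -a, b nor -b is a square (a, b ∉ Id(F) ∪ -Id(F)) and a ≠ b, then a and b are incomparable under ≤. -/
universe u

open TernarySemigroup

/-- The representation partial order on a RS-fan: `a ≤ b` iff `a ∈ D(1,b)` and
`-b ∈ D(1,-a)`. -/
def rle {G : Type u} [TernarySemigroup G] (a b : G) : Prop :=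
  fanD a 1 b ∧ fanD (tneg * b) 1 (tneg * a)

theorem stmt_14_aux {G : Type u} [TernarySemigroup G] (a b : G) (h : rle a b) (hne : a ≠ b) :
    (∃ x : G, a = x * x) ∨ (∃ x : G, tneg * b = x * x) := by
  have nn : ∀ z : G, tneg * (tneg * z) = z := fun z => by
    rw [← mul_assoc, tneg_mul_tneg, one_mul]
  have sq : ∀ x : G, x * x * (x * x) = x * x := fun x => by
    rw [← mul_assoc, cube]
  obtain ⟨h1, h2⟩ := h
  rcases h1 with ⟨x, hx⟩ | h1
  · exact Or.inl ⟨x, by rw [hx, one_mul]⟩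
  rcases h2 with ⟨y, hy⟩ | h2
  · exact Or.inr ⟨y, by rw [hy, one_mul]⟩
  have h2' : (∃ y : G, b = a * (y * y)) ∨ b = a * b := by
    rcases h2 with ⟨y, hy⟩ | ⟨hy, -⟩
    · left
      refine ⟨y, ?_⟩
      have := congrArg (tneg * ·) hy
      simpa only [mul_assoc, nn] using this
    · right
      have e : tneg * b * (tneg * a) = a * b := by
        rw [mul_mul_mul_comm, tneg_mul_tneg, one_mul, mul_comm]
      rw [e, mul_one] at hy
      have := congrArg (tneg * ·) hy
      simpa only [nn] using this
  have h1' : (∃ x : G, a = b * (x * x)) ∨ a = tneg * (a * b) := by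
    rcases h1 with h | ⟨h, -⟩
    · exact Or.inl h
    · rw [mul_one] at h
      exact Or.inr h
  rcases h1' with ⟨x, hx⟩ | hx
  · rcases h2' with ⟨y, hy⟩ | hy
    · exfalso
      apply hne
      have hax : a * (x * x) = a := by
        rw [hx, mul_assoc, sq]
      calc a = b * (x * x) := hx
        _ = a * (x * x) * (y * y) := by
          rw [mul_right_comm, ← hy]
        _ = b := by rw [hax, ← hy]
    · left
      refine ⟨a, ?_⟩
      calc a = b * (x * x) := hx
        _ = a * b * (x * x) := by rw [← hy]
        _ = a * a := by rw [mul_assoc, ← hx]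
  · right
    refine ⟨b, ?_⟩
    rcases h2' with ⟨y, hy⟩ | hy
    · have : b = tneg * (b * b) := by
        calc b = a * (y * y) := hy
          _ = tneg * (a * b) * (y * y) := by rw [← hx]
          _ = tneg * (a * (y * y) * b) := by rw [mul_assoc, mul_right_comm]
          _ = tneg * (b * b) := by rw [← hy]
      have := congrArg (tneg * ·) this
      simpa only [nn] using this
    · rw [← hy] at hx
      calc tneg * b = tneg * (a * b) := by rw [← hy]
        _ = b * b := by rw [hx, mul_assoc, nn]

/-- In a RS-fan: (1) if `a < b` then `a` is a square or `-b` is a square; (2) distinct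
elements none of whose ±-versions are squares are incomparable in the representation order. -/
theorem stmt_14 {G : Type u} [TernarySemigroup G] (hZ : CondZ G) (a b : G) :
    (rle a b → a ≠ b → (∃ x : G, a = x * x) ∨ (∃ x : G, tneg * b = x * x)) ∧
    ((¬ ∃ x : G, a = x * x) → (¬ ∃ x : G, tneg * a = x * x) →
     (¬ ∃ x : G, b = x * x) → (¬ ∃ x : G, tneg * b = x * x) →
      a ≠ b → ¬ rle a b ∧ ¬ rle b a) := by
  refine ⟨stmt_14_aux a b, fun h1 h2 h3 h4 hne => ⟨fun h => ?_, fun h => ?_⟩⟩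
  · exact (stmt_14_aux a b h hne).elim h1 h4
  · exact (stmt_14_aux b a h hne.symm).elim h3 h2
end

section
/- Let F be a RS-fan and let ≤ be its representation partial order. Then (F, ≤) is a lattice: every pair of elements of F has a least upper bound and a greatest lower bound with respect to ≤; moreover 1 is the smallest element and -1 is the largest element of (F, ≤). -/
universe u

open TernarySemigroup

theorem rle_iff_aux {F : Type u} [TernarySemigroup F] (hZ : CondZ F) (a b : F) :
    rle a b ↔ (a = a * a ∧ a * a * (b * b) = b * b) ∨
      (tneg * b = b * b ∧ a * a * (b * b) = a * a) ∨ a = b := by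
  have ca := cube a
  have cb := cube b
  have hn := tneg_mul_tneg (G := F)
  constructor
  · rintro ⟨hP, hQ⟩
    have P : a = a * a ∨ a = b * (a * a) ∨ a = tneg * (a * b) := by
      rcases hP with ⟨x, hx⟩ | ⟨x, hx⟩ | ⟨h, -⟩
      · left
        have := cube x
        grind
      · right; left
        have := cube x
        grind
      · right; right
        simpa using h
    have Q : tneg * b = b * b ∨ b = a * (b * b) ∨ b = a * b := by
      rcases hQ with ⟨x, hx⟩ | ⟨x, hx⟩ | ⟨h, -⟩
      · left
        have := cube x
        grind
      · right; left
        have := cube x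
        have h2 : b = a * (x * x) := by grind
        grind
      · right; right
        grind
    rcases hZ a b with h | h
    · rcases Q with q | q | q
      · exact Or.inr (Or.inl ⟨q, h⟩)
      · have : b * b = a * a := by grind
        grind
      · have e : b * b = a * a := by grind
        rcases P with p | p | p
        · left; grind
        · grind
        · right; left; grind
    · rcases P with p | p | p
      · exact Or.inl ⟨p, h⟩
      · have : b * b = a * a := by grind
        grind
      · have e : b * b = a * a := by grind
        rcases Q with q | q | q
        · right; left; grind
        · grind
        · right; left; grind
  · rintro (⟨h1, h2⟩ | ⟨h1, h2⟩ | rfl)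
    · refine ⟨Or.inl ⟨a, by simpa using h1⟩, Or.inr (Or.inr ⟨?_, by simp⟩)⟩
      have : b = a * b := by grind
      grind
    · refine ⟨Or.inr (Or.inr ⟨?_, by simp⟩), Or.inl ⟨b, by simpa using h1⟩⟩
      have : a = a * (b * b) := by grind
      grind
    · exact ⟨Or.inr (Or.inl ⟨a, by grind⟩), Or.inr (Or.inl ⟨a, by grind⟩)⟩

theorem rle_neg_aux {F : Type u} [TernarySemigroup F] (hZ : CondZ F) (a b : F) :
    rle (tneg * b) (tneg * a) ↔ rle a b := by
  have hn := tneg_mul_tneg (G := F)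
  have hh : ∀ x : F, tneg * (tneg * x) = x := fun x => by rw [← mul_assoc, hn, one_mul]
  unfold rle
  rw [hh, hh]
  exact and_comm

theorem join_aux {F : Type u} [TernarySemigroup F] (hZ : CondZ F) (a b : F)
    (hab : ¬ rle a b) (hba : ¬ rle b a) (h : a * a * (b * b) = b * b) :
    rle a (tneg * (a * a)) ∧ rle b (tneg * (a * a)) ∧
      ∀ c : F, rle a c → rle b c → rle (tneg * (a * a)) c := by
  have hn := tneg_mul_tneg (G := F)
  have ca := cube a
  have cb := cube b
  have hsq : tneg * (a * a) * (tneg * (a * a)) = a * a := by grind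
  have hneg : tneg * (tneg * (a * a)) = a * a := by grind
  have hna : a ≠ a * a := fun e => hab ((rle_iff_aux hZ a b).2 (Or.inl ⟨e, h⟩))
  refine ⟨?_, ?_, ?_⟩
  · rw [rle_iff_aux hZ, hsq, hneg]
    right; left; grind
  · rw [rle_iff_aux hZ, hsq, hneg]
    right; left; grind
  · intro c h1 h2
    rw [rle_iff_aux hZ] at h1
    rcases h1 with ⟨p, -⟩ | ⟨p, q⟩ | rfl
    · exact absurd p hna
    · rw [rle_iff_aux hZ, hsq]
      exact Or.inr (Or.inl ⟨p, q⟩)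
    · exact absurd h2 hba

theorem join_ex_aux {F : Type u} [TernarySemigroup F] (hZ : CondZ F) (a b : F) :
    ∃ s : F, rle a s ∧ rle b s ∧ ∀ c : F, rle a c → rle b c → rle s c := by
  have hr : ∀ x : F, rle x x := fun x => (rle_iff_aux hZ x x).2 (Or.inr (Or.inr rfl))
  by_cases hab : rle a b
  · exact ⟨b, hab, hr b, fun c _ h => h⟩
  by_cases hba : rle b a
  · exact ⟨a, hr a, hba, fun c h _ => h⟩
  rcases hZ a b with h | h
  · obtain ⟨h1, h2, h3⟩ := join_aux hZ b a hba hab (by rw [mul_comm]; exact h)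
    exact ⟨_, h2, h1, fun c x y => h3 c y x⟩
  · exact ⟨_, join_aux hZ a b hab hba h⟩


/-- A RS-fan, under its representation partial order, is a lattice with smallest element `1`
and largest element `-1`. -/
theorem stmt_16 (F : Type u) [TernarySemigroup F] (hZ : CondZ F) :
    (∀ a b : F, ∃ s : F, rle a s ∧ rle b s ∧ ∀ c : F, rle a c → rle b c → rle s c) ∧
    (∀ a b : F, ∃ m : F, rle m a ∧ rle m b ∧ ∀ c : F, rle c a → rle c b → rle c m) ∧
    (∀ a : F, rle 1 a) ∧
    (∀ a : F, rle a (tneg : F)) := by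


  have hn := tneg_mul_tneg (G := F)
  have hh : ∀ x : F, tneg * (tneg * x) = x := fun x => by rw [← mul_assoc, hn, one_mul]
  refine ⟨join_ex_aux hZ, ?_, ?_, ?_⟩
  · intro a b
    obtain ⟨s, h1, h2, h3⟩ := join_ex_aux hZ (tneg * a) (tneg * b)
    refine ⟨tneg * s, ?_, ?_, ?_⟩
    · rw [← rle_neg_aux hZ, hh]; exact h1
    · rw [← rle_neg_aux hZ, hh]; exact h2
    · intro c ha hb
      rw [← rle_neg_aux hZ, hh]
      exact h3 _ ((rle_neg_aux hZ _ _).2 ha) ((rle_neg_aux hZ _ _).2 hb)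
  · intro a
    rw [rle_iff_aux hZ]
    left; simp
  · intro a
    rw [rle_iff_aux hZ]
    right; left; simp [hn]
end

section
/- Let F be a RS-fan and let I be a proper ideal of F. Define the congruence ∼_I by: a ∼_I b iff h(a) = h(b) for every TS-character h of F with Z(h) = I. Then for all a, b ∈ F \ I: a ∼_I b if and only if there exists z ∈ F \ I with az = bz. -/
universe u

open TernarySemigroup

/-- Partial positive cones avoiding `I`. -/
def Cone17 {F : Type u} [TernarySemigroup F] (I T : Set F) : Prop :=
  (∀ z, z ∉ I → z * z ∈ T) ∧ (∀ x ∈ T, ∀ y ∈ T, x * y ∈ T) ∧ (∀ x ∈ T, x ∉ I) ∧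
    ∀ x ∈ T, (tneg : F) * x ∉ T

lemma prime17 {F : Type u} [TernarySemigroup F] (hZ : CondZ F)
    {I : Set F} (hI : TSIdeal I) {x y : F} (hx : x ∉ I) (hy : y ∉ I) : x * y ∉ I := by
  intro h
  have h2 : x * x * (y * y) ∈ I := by
    have := hI.2 _ h (x * y)
    rwa [mul_mul_mul_comm] at this
  rcases hZ x y with e | e <;> rw [e] at h2
  · have := hI.2 _ h2 x
    rw [cube] at this
    exact hx this
  · have := hI.2 _ h2 y
    rw [cube] at this
    exact hy this

lemma zero17 {F : Type u} [TernarySemigroup F] {I : Set F} (hI : TSIdeal I) :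
    (tzero : F) ∈ I := by
  obtain ⟨x, hx⟩ := hI.1
  have := hI.2 x hx tzero
  rwa [mul_tzero] at this

lemma negneg17 {F : Type u} [TernarySemigroup F] (x : F) : (tneg : F) * (tneg * x) = x := by
  rw [← mul_assoc, tneg_mul_tneg, one_mul]

lemma extend17 {F : Type u} [TernarySemigroup F] (hZ : CondZ F)
    {I : Set F} (hI : TSIdeal I) {T : Set F} (hT : Cone17 I T) {y : F} (hy : y ∉ I)
    (hn : ∀ u ∈ T, ∀ v ∈ T, u ≠ tneg * (y * v)) :
    Cone17 I (T ∪ {x | ∃ t ∈ T, x = y * t}) := by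
  obtain ⟨h1, h2, h3, h4⟩ := hT
  refine ⟨fun z hz => Or.inl (h1 z hz), ?_, ?_, ?_⟩
  · rintro x (hx | ⟨t, ht, rfl⟩) w (hw | ⟨s, hs, rfl⟩)
    · exact Or.inl (h2 _ hx _ hw)
    · exact Or.inr ⟨x * s, h2 _ hx _ hs, mul_left_comm _ _ _⟩
    · exact Or.inr ⟨t * w, h2 _ ht _ hw, mul_assoc _ _ _⟩
    · left
      rw [mul_mul_mul_comm]
      exact h2 _ (h1 _ hy) _ (h2 _ ht _ hs)
  · rintro x (hx | ⟨t, ht, rfl⟩)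
    · exact h3 _ hx
    · exact prime17 hZ hI hy (h3 _ ht)
  · rintro x (hx | ⟨t, ht, rfl⟩) (hw | ⟨s, hs, hw⟩)
    · exact h4 _ hx hw
    · apply hn x hx s hs
      rw [← hw, negneg17]
    · exact hn _ hw t ht rfl
    · apply h4 _ (h2 _ (h1 _ hy) _ ht)
      have : (tneg : F) * (y * y * t) = y * y * s := by
        calc (tneg : F) * (y * y * t) = y * (tneg * (y * t)) := by ac_rfl
          _ = y * y * s := by rw [hw, mul_assoc]
      rw [this]
      exact h2 _ (h1 _ hy) _ hs

lemma negI17 {F : Type u} [TernarySemigroup F] {I : Set F} (hI : TSIdeal I) {x : F}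
    (hx : x ∉ I) : (tneg : F) * x ∉ I := by
  intro h
  apply hx
  have := hI.2 _ h tneg
  rwa [mul_comm, negneg17] at this

lemma base17 {F : Type u} [TernarySemigroup F] (hZ : CondZ F)
    {I : Set F} (hI : TSIdeal I) : Cone17 I {x : F | ∃ z, z ∉ I ∧ x = z * z} := by
  refine ⟨fun z hz => ⟨z, hz, rfl⟩, ?_, ?_, ?_⟩
  · rintro x ⟨z, hz, rfl⟩ y ⟨w, hw, rfl⟩
    exact ⟨z * w, prime17 hZ hI hz hw, mul_mul_mul_comm _ _ _ _⟩
  · rintro x ⟨z, hz, rfl⟩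
    exact prime17 hZ hI hz hz
  · rintro x ⟨z, hz, rfl⟩ ⟨w, hw, h⟩
    apply prime17 hZ hI (prime17 hZ hI hz hz) (prime17 hZ hI hw hw)
    have : z * z * (w * w) = tzero := by
      apply eq_tzero_of_eq_tneg_mul
      have hz4 : z * z * (z * z) = z * z := by rw [← mul_assoc, cube]
      have hw4 : w * w * (w * w) = w * w := by rw [← mul_assoc, cube]
      have e1 : z * z * (w * w) = w * w := by
        rw [← h, mul_left_comm, hz4]
      calc z * z * (w * w) = w * w := e1
        _ = w * w * (w * w) := hw4.symm
        _ = tneg * (z * z) * (w * w) := by rw [h]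
        _ = _ := mul_assoc _ _ _
    rw [this]
    exact zero17 hI

lemma max17 {F : Type u} [TernarySemigroup F] {I T : Set F} (hT : Cone17 I T) :
    ∃ M, T ⊆ M ∧ Maximal (Cone17 I) M := by
  refine zorn_subset_nonempty {S | Cone17 I S} ?_ T hT
  intro c hc hchain hne
  obtain ⟨S0, hS0⟩ := hne
  have key : ∀ x ∈ ⋃₀ c, ∀ y ∈ ⋃₀ c, ∃ S ∈ c, x ∈ S ∧ y ∈ S := by
    rintro x ⟨S, hS, hx⟩ y ⟨S', hS', hy⟩
    rcases hchain.total hS hS' with h | h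
    · exact ⟨S', hS', h hx, hy⟩
    · exact ⟨S, hS, hx, h hy⟩
  refine ⟨⋃₀ c, ⟨?_, ?_, ?_, ?_⟩, fun s hs => Set.subset_sUnion_of_mem hs⟩
  · exact fun z hz => ⟨S0, hS0, (hc hS0).1 z hz⟩
  · intro x hx y hy
    obtain ⟨S, hS, h1, h2⟩ := key x hx y hy
    exact ⟨S, hS, (hc hS).2.1 _ h1 _ h2⟩
  · rintro x ⟨S, hS, hx⟩
    exact (hc hS).2.2.1 _ hx
  · intro x hx hy
    obtain ⟨S, hS, h1, h2⟩ := key x hx _ hy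
    exact (hc hS).2.2.2 _ h1 h2

lemma total17 {F : Type u} [TernarySemigroup F] (hZ : CondZ F)
    {I : Set F} (hI : TSIdeal I) (h1I : (1 : F) ∉ I) {T : Set F} (hT : Maximal (Cone17 I) T)
    {x : F} (hx : x ∉ I) : x ∈ T ∨ (tneg : F) * x ∈ T := by
  have h1 : (1 : F) ∈ T := by simpa using hT.prop.1 1 h1I
  have key : ∀ y : F, y ∉ I → y ∉ T → ∃ u ∈ T, ∃ v ∈ T, u = tneg * (y * v) := by
    intro y hy hyT
    by_contra! hcon
    exact hyT (hT.2 (extend17 hZ hI hT.prop hy hcon) Set.subset_union_left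
      (Or.inr ⟨1, h1, (mul_one y).symm⟩))
  by_contra! hcon
  obtain ⟨u, hu, v, hv, e⟩ := key x hx hcon.1
  obtain ⟨u', hu', v', hv', e'⟩ := key _ (negI17 hI hx) hcon.2
  rw [mul_assoc, negneg17] at e'
  apply hT.prop.2.2.2 _ (hT.prop.2.1 _ hu' _ hv)
  have : (tneg : F) * (u' * v) = u * v' := by rw [e, e']; ac_rfl
  rw [this]
  exact hT.prop.2.1 _ hu _ hv'

/-- In a RS-fan `F` with a proper ideal `I`, two elements outside `I` are congruent modulo
`I` (i.e., identified by every TS-character with zero-set `I`) iff they become equal after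
scaling by some element outside `I`. -/
theorem stmt_17 {F : Type u} [TernarySemigroup F] (hZ : CondZ F)
    (I : Set F) (hI : TSIdeal I) (hproper : I ≠ Set.univ)
    (a b : F) (ha : a ∉ I) (hb : b ∉ I) :
    ((∀ h : F → SignType, IsTSChar h → {x : F | h x = 0} = I → h a = h b) ↔
      ∃ z : F, z ∉ I ∧ a * z = b * z) := by
  have h1I : (1 : F) ∉ I := by
    intro h
    apply hproper
    ext x
    have := hI.2 _ h x
    simpa using this
  constructor
  · intro H
    by_contra! hcon
    have hab := prime17 hZ hI ha hb
    obtain ⟨T, hsub, hT⟩ := max17 (extend17 hZ hI (base17 hZ hI) (negI17 hI hab) (by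
      rintro u ⟨z, hz, rfl⟩ v ⟨w, hw, rfl⟩ e
      rw [mul_assoc, negneg17] at e
      have hz4 : z * z * (z * z) = z * z := by rw [← mul_assoc, cube]
      have hw4 : w * w * (w * w) = w * w := by rw [← mul_assoc, cube]
      refine hcon (b * b * (z * z * (w * w))) (prime17 hZ hI (prime17 hZ hI hb hb)
        (prime17 hZ hI (prime17 hZ hI hz hz) (prime17 hZ hI hw hw))) ?_
      calc a * (b * b * (z * z * (w * w))) = (a * b * (w * w)) * (b * (z * z)) := by ac_rfl
        _ = z * z * (b * (z * z)) := by rw [e]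
        _ = b * (z * z * (z * z)) := by ac_rfl
        _ = b * (z * z) := by rw [hz4]
        _ = b * (a * b * (w * w)) := by rw [e]
        _ = b * (a * b * (w * w * (w * w))) := by rw [hw4]
        _ = b * (a * b * (w * w) * (w * w)) := by rw [mul_assoc (a * b)]
        _ = b * (z * z * (w * w)) := by rw [e]
        _ = b * b * b * (z * z * (w * w)) := by rw [cube]
        _ = b * (b * b * (z * z * (w * w))) := by ac_rfl))
    have h1T : (1 : F) ∈ T := by simpa using hT.prop.1 1 h1I
    have hnab : (tneg : F) * (a * b) ∈ T :=
      hsub (Or.inr ⟨1, ⟨1, h1I, (mul_one 1).symm⟩, (mul_one _).symm⟩)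
    have htot := fun {x : F} (hx : x ∉ I) => total17 hZ hI h1I hT hx
    obtain ⟨-, hmul, hTI, hneg⟩ := hT.prop
    have hnegs : ∀ x y : F, (tneg : F) * x ∈ T → tneg * y ∈ T → x * y ∈ T := by
      intro x y hx hy
      have := hmul _ hx _ hy
      rwa [mul_mul_mul_comm, tneg_mul_tneg, one_mul] at this
    classical
    let h : F → SignType := fun x => if x ∈ I then 0 else if x ∈ T then 1 else -1
    have h0 : ∀ x, x ∈ I → h x = 0 := fun x hx => by simp [h, hx]
    have hp : ∀ x, x ∈ T → h x = 1 := fun x hx => by simp [h, hx, hTI x hx]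
    have hm : ∀ x, (tneg : F) * x ∈ T → h x = -1 := by
      intro x hx
      have hxT : x ∉ T := fun h' => hneg _ h' hx
      have hxI : x ∉ I := fun h' => hTI _ hx (by rw [mul_comm]; exact hI.2 _ h' _)
      simp [h, hxT, hxI]
    have hchar : IsTSChar h := by
      refine ⟨?_, hp _ h1T, h0 _ (zero17 hI), hm _ (by rwa [tneg_mul_tneg])⟩
      intro x y
      by_cases hx : x ∈ I
      · rw [h0 x hx, h0 _ (hI.2 _ hx y), zero_mul]
      by_cases hy : y ∈ I
      · rw [h0 y hy, h0 (x * y) (by rw [mul_comm]; exact hI.2 _ hy x), mul_zero]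
      rcases htot hx with hx | hx <;> rcases htot hy with hy | hy
      · rw [hp x hx, hp y hy, hp _ (hmul _ hx _ hy)]; rfl
      · rw [hp x hx, hm y hy, hm (x * y) (by rw [mul_left_comm]; exact hmul _ hx _ hy)]; rfl
      · rw [hm x hx, hp y hy, hm (x * y) (by rw [← mul_assoc]; exact hmul _ hx _ hy)]; rfl
      · rw [hm x hx, hm y hy, hp _ (hnegs _ _ hx hy)]; rfl
    have hzero : {x : F | h x = 0} = I := by
      ext x
      refine ⟨fun hx => ?_, h0 x⟩
      by_contra hxI
      rcases htot hxI with h' | h'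
      · have := hp x h'
        rw [Set.mem_setOf_eq] at hx
        rw [hx] at this
        exact absurd this (by decide)
      · have := hm x h'
        rw [Set.mem_setOf_eq] at hx
        rw [hx] at this
        exact absurd this (by decide)
    have heq := H h hchar hzero
    have hprod := hchar.1 a b
    rw [hm _ hnab, heq] at hprod
    revert hprod
    generalize h b = s
    revert s
    decide
  · rintro ⟨z, hz, e⟩ h hh hzI
    have hz0 : h z ≠ 0 := fun h' => hz (by rw [← hzI]; exact h')
    have e2 : h a * h z = h b * h z := by rw [← hh.1, ← hh.1, e]
    exact mul_right_cancel₀ hz0 e2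
end

section
/- Let G be a RS-fan. Let g, h be TS-characters of G with g ⇝ h (i.e., h = h²·g), and let I be an ideal of G with Z(g) ⊆ I ⊆ Z(h). Then there exists a TS-character f of G such that g ⇝ f (f = f²·g), f ⇝ h (h = h²·f), and Z(f) = I. -/
universe u

open TernarySemigroup

/-- In a RS-fan, given characters `g ⇝ h` and an ideal `I` with `Z(g) ⊆ I ⊆ Z(h)`, there is
an intermediate character `f` with `g ⇝ f ⇝ h` and `Z(f) = I`. -/
theorem stmt_18 {G : Type u} [TernarySemigroup G] (hZ : CondZ G)
    (g h : G → SignType) (hg : IsTSChar g) (hh : IsTSChar h)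
    (hspec : ∀ a : G, h a = h a * h a * g a)
    (I : Set G) (hI : TSIdeal I)
    (hgI : {a : G | g a = 0} ⊆ I) (hIh : I ⊆ {a : G | h a = 0}) :
    ∃ f : G → SignType, IsTSChar f ∧ (∀ a : G, f a = f a * f a * g a) ∧
      (∀ a : G, h a = h a * h a * f a) ∧ {a : G | f a = 0} = I := by
  classical
  obtain ⟨hgm, hg1, hg0, hgn⟩ := hg
  obtain ⟨-, hh1, -, hhn⟩ := hh
  have key : ∀ x : G, x * x ∈ I → x ∈ I := fun x hx => by
    have := hI.2 _ hx x
    rwa [cube] at this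
  have prime : ∀ x y : G, x * y ∈ I → x ∈ I ∨ y ∈ I := fun x y hxy => by
    have h2 : x * x * (y * y) ∈ I := by
      have := hI.2 _ hxy (x * y)
      rwa [mul_mul_mul_comm] at this
    rcases hZ x y with e | e
    · exact Or.inl (key x (e ▸ h2))
    · exact Or.inr (key y (e ▸ h2))
  have h1 : (1 : G) ∉ I := fun hx => by
    have h3 : h 1 = 0 := hIh hx
    rw [hh1] at h3
    exact absurd h3 (by decide)
  have hn : (tneg : G) ∉ I := fun hx => by
    have h3 : h tneg = 0 := hIh hx
    rw [hhn] at h3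
    exact absurd h3 (by decide)
  have h0 : (tzero : G) ∈ I := hgI hg0
  refine ⟨fun a => if a ∈ I then 0 else g a, ⟨?_, ?_, ?_, ?_⟩, ?_, ?_, ?_⟩
  · intro x y
    by_cases hx : x ∈ I
    · simp [hx, hI.2 x hx y]
    · by_cases hy : y ∈ I
      · have : x * y ∈ I := by
          rw [mul_comm]
          exact hI.2 y hy x
        simp [hy, this]
      · have : x * y ∉ I := fun hxy => (prime x y hxy).elim hx hy
        simp [hx, hy, this, hgm]
  · simp [h1, hg1]
  · simp [h0]
  · simp [hn, hgn]
  · intro a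
    by_cases ha : a ∈ I
    · simp [ha]
    · simp only [ha, if_false]
      generalize g a = t
      revert t
      decide
  · intro a
    by_cases ha : a ∈ I
    · have h3 : h a = 0 := hIh ha
      simp [h3]
    · simpa only [ha, if_false] using hspec a
  · ext a
    by_cases ha : a ∈ I
    · simp [ha]
    · have h3 : g a ≠ 0 := fun e => ha (hgI e)
      simp [ha, h3]
end

section
/- Let A be a commutative ring and let T be a total preorder of A (a preorder with T ∪ -T = A). Then the real spectrum Sper(A,T) is totally ordered by specialization: any two prime cones α, β of A with T ⊆ α and T ⊆ β satisfy α ⊆ β or β ⊆ α. -/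
/-- A preorder of a commutative ring `A`: a subset closed under addition and multiplication,
containing all squares, and not containing `-1`. -/
def IsRingPreorder {A : Type*} [CommRing A] (T : Set A) : Prop :=
  (∀ x ∈ T, ∀ y ∈ T, x + y ∈ T) ∧ (∀ x ∈ T, ∀ y ∈ T, x * y ∈ T) ∧
  (∀ a : A, a * a ∈ T) ∧ (-1 : A) ∉ T

/-- A prime cone of a commutative ring `A` (a point of the real spectrum `Sper A`):
closed under addition and multiplication, `α ∪ -α = A`, `-1 ∉ α`, and the support
`α ∩ -α` is a prime ideal. -/
def IsPrimeCone {A : Type*} [CommRing A] (α : Set A) : Prop :=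
  (∀ x ∈ α, ∀ y ∈ α, x + y ∈ α) ∧ (∀ x ∈ α, ∀ y ∈ α, x * y ∈ α) ∧
  α ∪ (-α) = Set.univ ∧ (-1 : A) ∉ α ∧
  (∀ a b : A, a * b ∈ α ∩ (-α) → a ∈ α ∩ (-α) ∨ b ∈ α ∩ (-α))

/-- If `T` is a total preorder of a commutative ring `A`, then `Sper(A,T)` is totally
ordered by specialization: any two prime cones containing `T` are comparable by inclusion. -/
theorem stmt_19 {A : Type*} [CommRing A] (T : Set A)
    (hT : IsRingPreorder T) (htotal : T ∪ (-T) = Set.univ)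
    (α β : Set A) (hα : IsPrimeCone α) (hβ : IsPrimeCone β)
    (hTα : T ⊆ α) (hTβ : T ⊆ β) :
    α ⊆ β ∨ β ⊆ α := by
  by_contra hcon
  rw [not_or, Set.not_subset, Set.not_subset] at hcon
  obtain ⟨⟨a, haα, haβ⟩, b, hbβ, hbα⟩ := hcon
  have h : a - b ∈ T ∪ (-T) := htotal ▸ Set.mem_univ _
  rcases h with h | h
  · apply haβ
    have := hβ.1 _ (hTβ h) _ hbβ
    rwa [sub_add_cancel] at this
  · apply hbα
    rw [Set.mem_neg, neg_sub] at h
    have := hα.1 _ (hTα h) _ haα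
    rwa [sub_add_cancel] at this
end
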